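/- Let P be a fullerene, and let a k-loop L_k border a 5-belt of P. Then the facets of L_k are pairwise different. -/

import Mathlib

open Set

noncomputable section

/-- The ambient space `ℝ³`. -/
abbrev E3 := EuclideanSpace ℝ (Fin 3)

/-- The cyclic successor in `Fin k`. -/
def nxt {k : ℕ} (i : Fin k) : Fin k := ⟨(i.1 + 1) % k, Nat.mod_lt _ i.pos⟩

/-- The cyclic predecessor in `Fin k`. -/
def prv {k : ℕ} (i : Fin k) : Fin k := ⟨(i.1 + (k - 1)) % k, Nat.mod_lt _ i.pos⟩

/-- A convex polytope in `ℝ³`: the convex hull of a finite set of points. -/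
def IsPolytope (P : Set E3) : Prop := ∃ V : Finset E3, P = convexHull ℝ (V : Set E3)

/-- The dimension of a subset of `ℝ³` (the dimension of its affine hull). -/
def setDim (A : Set E3) : ℕ := Module.finrank ℝ ↥(vectorSpan ℝ A)

/-- A face of a polytope: a nonempty closed convex extreme subset. -/
def IsFaceOf (F P : Set E3) : Prop :=
  F.Nonempty ∧ IsClosed F ∧ Convex ℝ F ∧ IsExtreme ℝ P F

/-- A facet: a `2`-dimensional face. -/
def IsFacetOf (F P : Set E3) : Prop := IsFaceOf F P ∧ setDim F = 2

/-- An edge: a `1`-dimensional face. -/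
def IsEdgeOf (F P : Set E3) : Prop := IsFaceOf F P ∧ setDim F = 1

/-- A vertex: a point whose singleton is a face. -/
def IsVertexOf (v : E3) (P : Set E3) : Prop := IsFaceOf {v} P

/-- The set of facets of `P`. -/
def facets (P : Set E3) : Set (Set E3) := {F | IsFacetOf F P}

/-- A simple 3-polytope: a 3-dimensional convex polytope each of whose vertices
is contained in exactly 3 facets. -/
def IsSimplePolytope3 (P : Set E3) : Prop :=
  IsPolytope P ∧ setDim P = 3 ∧
    ∀ v : E3, IsVertexOf v P → {F | IsFacetOf F P ∧ v ∈ F}.ncard = 3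

/-- The number of edges of a facet `F` of `P`. -/
def facetEdges (P F : Set E3) : ℕ := {e | IsEdgeOf e P ∧ e ⊆ F}.ncard

/-- `pVec P k` is the number of `k`-gonal facets of `P`. -/
def pVec (P : Set E3) (k : ℕ) : ℕ := {F | IsFacetOf F P ∧ facetEdges P F = k}.ncard

/-- A (mathematical) fullerene: a simple 3-polytope with all facets pentagons
and hexagons. -/
def IsFullerene (P : Set E3) : Prop :=
  IsSimplePolytope3 P ∧ ∀ F, IsFacetOf F P → facetEdges P F = 5 ∨ facetEdges P F = 6

/-- A `k`-loop in `P` (`k ≥ 2`): a cyclic sequence of facets in which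
(cyclically) consecutive facets intersect in an edge; a `1`-loop is a single facet. -/
def IsLoop (P : Set E3) {k : ℕ} (L : Fin k → Set E3) : Prop :=
  0 < k ∧ (∀ i, IsFacetOf (L i) P) ∧ (2 ≤ k → ∀ i, IsEdgeOf (L i ∩ L (nxt i)) P)

/-- A simple loop: a loop with pairwise different facets. -/
def IsSimpleLoop (P : Set E3) {k : ℕ} (L : Fin k → Set E3) : Prop :=
  IsLoop P L ∧ Function.Injective L

/-- A `k`-belt (`k ≥ 3`): a `k`-loop such that for `k = 3` the three facets have empty
total intersection, and for `k ≥ 4` two facets intersect iff they are cyclically successive. -/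
def IsBelt (P : Set E3) {k : ℕ} (L : Fin k → Set E3) : Prop :=
  3 ≤ k ∧ IsLoop P L ∧
    (k = 3 → ∀ i, L i ∩ L (nxt i) ∩ L (nxt (nxt i)) = ∅) ∧
    (4 ≤ k → ∀ p q, p ≠ q → ((L p ∩ L q).Nonempty ↔ q = nxt p ∨ p = nxt q))

/-- A flag 3-polytope: a simple 3-polytope different from the tetrahedron
(i.e. not having exactly 4 facets) without 3-belts. -/
def IsFlag3Polytope (P : Set E3) : Prop :=
  IsSimplePolytope3 P ∧ (facets P).ncard ≠ 4 ∧ ∀ B : Fin 3 → Set E3, ¬ IsBelt P B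

/-- `γ` is the simple edge-cycle of `P` traced by the cyclically ordered distinct
vertices `v 0, …, v (n-1)` (`n ≥ 3`), consecutive ones joined by edges of `P`. -/
def IsSimpleEdgeCycleVia (P γ : Set E3) {n : ℕ} (v : Fin n → E3) : Prop :=
  3 ≤ n ∧ Function.Injective v ∧ (∀ i, IsVertexOf (v i) P) ∧
    (∀ i, IsEdgeOf (segment ℝ (v i) (v (nxt i))) P) ∧
    γ = ⋃ i, segment ℝ (v i) (v (nxt i))

/-- A simple edge-cycle in the graph of `P`. -/
def IsSimpleEdgeCycle (P γ : Set E3) : Prop :=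
  ∃ (n : ℕ) (v : Fin n → E3), IsSimpleEdgeCycleVia P γ v

/-- `C` is a connected component of the set `A`. -/
def IsCompOf (C A : Set E3) : Prop := ∃ x ∈ A, C = connectedComponentIn A x

/-- The loop `L` is obtained by walking round the simple edge-cycle `γ` inside the
connected component `C` of `∂P ∖ γ`: the facets of `L` lie on the side `C`, and the
edges of `γ`, in cyclic order, lie in the facets of `L` in cyclic order (the loop
index advancing exactly when the facet changes, and making exactly one turn). -/
def WalksRound (P γ C : Set E3) {k : ℕ} (L : Fin k → Set E3) : Prop :=
  IsLoop P L ∧ (∀ i, intrinsicInterior ℝ (L i) ⊆ C) ∧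
    ∃ (n : ℕ) (v : Fin n → E3) (φ : Fin n → Fin k),
      IsSimpleEdgeCycleVia P γ v ∧
      (∀ i, segment ℝ (v i) (v (nxt i)) ⊆ L (φ i)) ∧
      (∀ i, φ (nxt i) = φ i ∨ φ (nxt i) = nxt (φ i)) ∧
      Function.Surjective φ ∧
      (2 ≤ k → (Finset.univ.filter (fun i : Fin n => φ (nxt i) ≠ φ i)).card = k)

/-- Two loops border each other: they are obtained by walking round the same simple
edge-cycle `γ` in the two different connected components of `∂P ∖ γ`. -/
def Borders (P : Set E3) {k₁ k₂ : ℕ} (L₁ : Fin k₁ → Set E3) (L₂ : Fin k₂ → Set E3) : Prop :=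
  ∃ γ C₁ C₂ : Set E3, IsCompOf C₁ (frontier P \ γ) ∧ IsCompOf C₂ (frontier P \ γ) ∧
    C₁ ≠ C₂ ∧ WalksRound P γ C₁ L₁ ∧ WalksRound P γ C₂ L₂

/-- A loop surrounds the facet `F` if it borders the `1`-loop `(F)`. -/
def Surrounds (P : Set E3) {k : ℕ} (L : Fin k → Set E3) (F : Set E3) : Prop :=
  IsFacetOf F P ∧ Borders P L (fun _ : Fin 1 => F)

/-- The number of edges of `P` lying in the facet `F` and in the set `γ`. -/
def edgesInCommon (P F γ : Set E3) : ℕ := {e | IsEdgeOf e P ∧ e ⊆ F ∧ e ⊆ γ}.ncard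
/-- A simple 3-polytope all of whose facets are pentagons and hexagons except for
at most one exceptional facet, which is a quadrangle or a heptagon. -/
def IsAlmostFullerene (P : Set E3) : Prop :=
  IsSimplePolytope3 P ∧
    (∀ F, IsFacetOf F P → facetEdges P F ∈ ({4, 5, 6, 7} : Set ℕ)) ∧
    {F | IsFacetOf F P ∧ (facetEdges P F = 4 ∨ facetEdges P F = 7)}.ncard ≤ 1

/-- The (combinatorial) dodecahedron: a simple 3-polytope with all facets pentagons. -/
def IsDodecahedron (P : Set E3) : Prop :=
  IsSimplePolytope3 P ∧ ∀ F, IsFacetOf F P → facetEdges P F = 5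

/-- `e` and `e'` are opposite edges of the hexagonal facet `H`: they are disjoint and no
edge of `H` meets both of them. -/
def OppositeEdges (P H e e' : Set E3) : Prop :=
  IsEdgeOf e P ∧ IsEdgeOf e' P ∧ e ⊆ H ∧ e' ⊆ H ∧ e ∩ e' = ∅ ∧
    ∀ e'', IsEdgeOf e'' P → e'' ⊆ H → (e'' ∩ e).Nonempty → e'' ≠ e → e'' ∩ e' = ∅

/-- A cap: a pentagonal facet `F₀` together with a surrounding 5-belt of pentagons. -/
def IsCapOf (P F₀ : Set E3) (L : Fin 5 → Set E3) : Prop :=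
  IsFacetOf F₀ P ∧ facetEdges P F₀ = 5 ∧ (∀ i, facetEdges P (L i) = 5) ∧
    IsBelt P L ∧ Surrounds P L F₀

/-- The number of 5-belts of `P` (counted as sets of facets). -/
def fiveBeltCount (P : Set E3) : ℕ :=
  {S : Set (Set E3) | ∃ B : Fin 5 → Set E3, IsBelt P B ∧ S = Set.range B}.ncard

/-- The structure of the `k`-th fullerene of Family I: two caps separated by `k`
hexagonal 5-belts, each bordering the next (for `k = 0` the caps border each other,
giving the dodecahedron). -/
def FamilyI (P : Set E3) (k : ℕ) : Prop :=
  ∃ (F₀ F₀' : Set E3) (L L' : Fin 5 → Set E3) (B : ℕ → Fin 5 → Set E3),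
    IsCapOf P F₀ L ∧ IsCapOf P F₀' L' ∧
    (∀ i < k, IsBelt P (B i) ∧ ∀ j, facetEdges P (B i j) = 6) ∧
    (∀ i, i + 1 < k → Borders P (B i) (B (i + 1))) ∧
    (0 < k → Borders P L (B 0) ∧ Borders P (B (k - 1)) L') ∧
    (k = 0 → Borders P L L') ∧
    facets P = {F₀, F₀'} ∪ Set.range L ∪ Set.range L' ∪ ⋃ i ∈ Set.Iio k, Set.range (B i)

/-- `P` is obtained from `Q` by an `(s,k;t₀,t₁)`-truncation with new edge `Enew`:
`P` is cut off from `Q` by a halfspace `{f ≤ c}` whose boundary plane crosses exactly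
two edges `E₀ ≠ E₁` of a `k`-gonal facet `F` of `Q`, cutting off exactly `s` vertices,
all belonging to `F`; `G₀` and `G₁` are the facets meeting `F` along `E₀` and `E₁`, and
they are `t₀`- and `t₁`-gons; `Enew` is the new edge dividing `F`. -/
def IsTruncation (s k t₀ t₁ : ℕ) (Q P Enew : Set E3) : Prop :=
  IsSimplePolytope3 Q ∧ IsSimplePolytope3 P ∧
    ∃ (F E₀ E₁ G₀ G₁ : Set E3) (f : E3 →ₗ[ℝ] ℝ) (c : ℝ),
      IsFacetOf F Q ∧ facetEdges Q F = k ∧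
      IsEdgeOf E₀ Q ∧ IsEdgeOf E₁ Q ∧ E₀ ≠ E₁ ∧ E₀ ⊆ F ∧ E₁ ⊆ F ∧
      IsFacetOf G₀ Q ∧ IsFacetOf G₁ Q ∧ G₀ ≠ F ∧ G₁ ≠ F ∧ E₀ ⊆ G₀ ∧ E₁ ⊆ G₁ ∧
      facetEdges Q G₀ = t₀ ∧ facetEdges Q G₁ = t₁ ∧
      P = Q ∩ {x | f x ≤ c} ∧
      (∀ e, IsEdgeOf e Q → (∃ x ∈ e, c < f x) → (∃ x ∈ e, f x < c) → e = E₀ ∨ e = E₁) ∧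
      (∃ x ∈ E₀, c < f x) ∧ (∃ x ∈ E₀, f x < c) ∧
      (∃ x ∈ E₁, c < f x) ∧ (∃ x ∈ E₁, f x < c) ∧
      (∀ v, IsVertexOf v Q → f v ≠ c) ∧
      {v | IsVertexOf v Q ∧ c < f v}.ncard = s ∧
      (∀ v, IsVertexOf v Q → c < f v → v ∈ F) ∧
      Enew = F ∩ {x | f x = c}

/-- Combinatorial equivalence of polytopes: an inclusion-preserving bijection
between the sets of faces. -/
def CombEquiv (P Q : Set E3) : Prop :=
  ∃ φ : {A : Set E3 // IsFaceOf A P} ≃ {A : Set E3 // IsFaceOf A Q},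
    ∀ A B : {A : Set E3 // IsFaceOf A P}, A.1 ⊆ B.1 ↔ (φ A).1 ⊆ (φ B).1

/-- Combinatorial equivalence sending the face `Ep` of `P` to the face `Eq` of `Q`. -/
def CombEquivMapping (P Q Ep Eq : Set E3) : Prop :=
  ∃ φ : {A : Set E3 // IsFaceOf A P} ≃ {A : Set E3 // IsFaceOf A Q},
    (∀ A B : {A : Set E3 // IsFaceOf A P}, A.1 ⊆ B.1 ↔ (φ A).1 ⊆ (φ B).1) ∧
    ∀ h : IsFaceOf Ep P, ((φ ⟨Ep, h⟩) : {A : Set E3 // IsFaceOf A Q}).1 = Eq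

/-- The straightening of `P` along the edge `E` is defined: `P` is combinatorially
obtained from some simple 3-polytope `Q` by an `(s,k)`-truncation whose new edge
corresponds to `E`. -/
def StraighteningDefined (P E : Set E3) : Prop :=
  ∃ (s k t₀ t₁ : ℕ) (Q P₁ E₁ : Set E3),
    IsTruncation s k t₀ t₁ Q P₁ E₁ ∧ CombEquivMapping P P₁ E E₁

/-- `P` is obtained from `Q` by one of the truncations
`(1;4,5)`, `(1;5,5)`, `(2,6;4,5)`, `(2,6;5,5)`, `(2,6;5,6)`, `(2,7;5,5)`, `(2,7;5,6)`. -/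
def FullereneStep (Q P : Set E3) : Prop :=
  ∃ (s k t₀ t₁ : ℕ) (Enew : Set E3), IsTruncation s k t₀ t₁ Q P Enew ∧
    ((s = 1 ∧ (({t₀, t₁} : Finset ℕ) = {4, 5} ∨ ({t₀, t₁} : Finset ℕ) = {5, 5})) ∨
     (s = 2 ∧ k = 6 ∧ (({t₀, t₁} : Finset ℕ) = {4, 5} ∨ ({t₀, t₁} : Finset ℕ) = {5, 5} ∨
        ({t₀, t₁} : Finset ℕ) = {5, 6})) ∨
     (s = 2 ∧ k = 7 ∧ (({t₀, t₁} : Finset ℕ) = {5, 5} ∨ ({t₀, t₁} : Finset ℕ) = {5, 6})))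


/-- Combinatorial data of a simple polytope with height function. -/
structure Cx (V Φ : Type) [Fintype V] [DecidableEq V] [Fintype Φ] [DecidableEq Φ] where
  I : V → Finset Φ
  h : V → ℝ
  card3 : ∀ v, (I v).card = 3
  pair : ∀ F G, F ≠ G → ∀ v, F ∈ I v → G ∈ I v →
    (Finset.univ.filter (fun w => F ∈ I w ∧ G ∈ I w)).card = 2
  deg : ∀ F, 5 ≤ (Finset.univ.filter (fun G => G ≠ F ∧ ∃ v, F ∈ I v ∧ G ∈ I v)).card ∧
    (Finset.univ.filter (fun G => G ≠ F ∧ ∃ v, F ∈ I v ∧ G ∈ I v)).card ≤ 6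
  inj : Function.Injective h
  loc : ∀ F v, F ∈ I v →
    (∀ w, F ∈ I w → w ≠ v → (∃ G, G ≠ F ∧ G ∈ I v ∧ G ∈ I w) → h w ≤ h v) →
    ∀ w, F ∈ I w → h w ≤ h v
  glob : ∀ v, (∀ w, w ≠ v → (∃ F G, F ≠ G ∧ F ∈ I v ∧ G ∈ I v ∧ F ∈ I w ∧ G ∈ I w) → h w ≤ h v) →
    ∀ w, h w ≤ h v

namespace Cx
variable {V Φ : Type} [Fintype V] [DecidableEq V] [Fintype Φ] [DecidableEq Φ] (c : Cx V Φ)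

def VF (F : Φ) : Finset V := Finset.univ.filter (fun v => F ∈ c.I v)

def Ed (F G : Φ) : Finset V := Finset.univ.filter (fun v => F ∈ c.I v ∧ G ∈ c.I v)

def cutp (X : Finset V) (F G : Φ) : Prop := F ≠ G ∧ (c.Ed F G ∩ X).card = 1

instance (X : Finset V) (F G : Φ) : Decidable (c.cutp X F G) := by unfold cutp; infer_instance

def cut (X : Finset V) : Finset Φ :=
  Finset.univ.filter (fun F => (∃ v ∈ X, F ∈ c.I v) ∧ (∃ v, v ∉ X ∧ F ∈ c.I v))

def D (X : Finset V) (F : Φ) : ℕ := ∑ G, if c.cutp X F G then 1 else 0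

def e2 (X : Finset V) : ℕ := ∑ F, c.D X F

def P2 (X : Finset V) (v : V) : ℕ := ∑ F ∈ c.I v, ∑ G ∈ c.I v, if c.cutp X F G then 1 else 0

def t (X : Finset V) : ℕ := ∑ F ∈ c.cut X, (c.VF F ∩ X).card

def cn (X : Finset V) (v : V) : ℕ := (c.I v ∩ c.cut X).card

@[simp] lemma mem_VF {F : Φ} {v : V} : v ∈ c.VF F ↔ F ∈ c.I v := by simp [VF]
@[simp] lemma mem_Ed {F G : Φ} {v : V} : v ∈ c.Ed F G ↔ F ∈ c.I v ∧ G ∈ c.I v := by simp [Ed]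

lemma Ed_symm (F G : Φ) : c.Ed F G = c.Ed G F := by ext; simp [and_comm]

lemma cutp_symm {X : Finset V} {F G : Φ} (hh : c.cutp X F G) : c.cutp X G F := by
  unfold cutp at *
  rw [Ed_symm]; exact ⟨hh.1.symm, hh.2⟩

lemma cutp_comm {X : Finset V} {F G : Φ} : c.cutp X F G ↔ c.cutp X G F :=
  ⟨c.cutp_symm, c.cutp_symm⟩

lemma not_cutp_self {X : Finset V} {F : Φ} : ¬ c.cutp X F F := fun hh => hh.1 rfl

/-- An edge through `v` has a unique other end. -/
lemma Ed_eq {F G : Φ} (hFG : F ≠ G) {v : V} (hF : F ∈ c.I v) (hG : G ∈ c.I v) :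
    ∃ w, w ≠ v ∧ c.Ed F G = {v, w} := by
  have h2 : (c.Ed F G).card = 2 := c.pair F G hFG v hF hG
  obtain ⟨a, b, hab, he⟩ := Finset.card_eq_two.1 h2
  have hv : v ∈ c.Ed F G := by simp [hF, hG]
  rw [he] at hv
  simp at hv
  rcases hv with rfl | rfl
  · exact ⟨b, hab.symm, he⟩
  · exact ⟨a, hab, by rw [he, Finset.pair_comm]⟩

lemma cutp_iff {X : Finset V} {F G : Φ} (hFG : F ≠ G) {v w : V} (hvw : w ≠ v)
    (he : c.Ed F G = {v, w}) : c.cutp X F G ↔ ((v ∈ X ∧ w ∉ X) ∨ (v ∉ X ∧ w ∈ X)) := by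
  unfold cutp
  rw [he]
  by_cases h1 : v ∈ X <;> by_cases h2 : w ∈ X
  · have : ({v, w} : Finset V) ∩ X = {v, w} := by
      ext x; simp; rintro (rfl | rfl) <;> assumption
    rw [this, Finset.card_pair hvw.symm]; simp [h1, h2]
  · have : ({v, w} : Finset V) ∩ X = {v} := by
      ext x; simp; constructor
      · rintro ⟨rfl | rfl, h⟩
        · rfl
        · exact absurd h h2
      · rintro rfl; exact ⟨Or.inl rfl, h1⟩
    rw [this]; simp [h1, h2, hFG]
  · have : ({v, w} : Finset V) ∩ X = {w} := by
      ext x; simp; constructor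
      · rintro ⟨rfl | rfl, h⟩
        · exact absurd h h1
        · rfl
      · rintro rfl; exact ⟨Or.inr rfl, h2⟩
    rw [this]; simp [h1, h2, hFG]
  · have : ({v, w} : Finset V) ∩ X = ∅ := by
      ext x; simp; rintro (rfl | rfl) <;> assumption
    rw [this]; simp [h1, h2]

lemma Ed_cases {F G : Φ} (hFG : F ≠ G) :
    c.Ed F G = ∅ ∨ ∃ v w, w ≠ v ∧ c.Ed F G = {v, w} := by
  rcases (c.Ed F G).eq_empty_or_nonempty with h | ⟨v, hv⟩
  · exact Or.inl h
  · rw [mem_Ed] at hv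
    obtain ⟨w, h1, h2⟩ := c.Ed_eq hFG hv.1 hv.2
    exact Or.inr ⟨v, w, h1, h2⟩

lemma cutp_ends {X : Finset V} {F G : Φ} (hh : c.cutp X F G) :
    ∃ v w, v ∈ X ∧ w ∉ X ∧ c.Ed F G = {v, w} := by
  rcases c.Ed_cases hh.1 with h | ⟨v, w, hvw, he⟩
  · have := hh.2; rw [h] at this; simp at this
  · rcases (c.cutp_iff hh.1 hvw he).1 hh with h | h
    · exact ⟨v, w, h.1, h.2, he⟩
    · exact ⟨w, v, h.2, h.1, by rw [he, Finset.pair_comm]⟩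

lemma cutp_mem_cut {X : Finset V} {F G : Φ} (hh : c.cutp X F G) : F ∈ c.cut X := by
  obtain ⟨v, w, hv, hw, he⟩ := c.cutp_ends hh
  have h1 : v ∈ c.Ed F G := by rw [he]; simp
  have h2 : w ∈ c.Ed F G := by rw [he]; simp
  rw [mem_Ed] at h1 h2
  simp only [cut, Finset.mem_filter, Finset.mem_univ, true_and]
  exact ⟨⟨v, hv, h1.1⟩, ⟨w, hw, h2.1⟩⟩

lemma sum_pair {M : Type*} [AddCommMonoid M] (F : Φ) (f : V → M) :
    ∑ G ∈ Finset.univ.erase F, ∑ x ∈ c.Ed F G, f x = ∑ x ∈ c.VF F, (2 : ℕ) • f x := by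
  have h1 : ∀ G, ∑ x ∈ c.Ed F G, f x = ∑ x ∈ c.VF F, if G ∈ c.I x then f x else 0 := by
    intro G
    rw [← Finset.sum_filter]
    apply Finset.sum_congr _ (fun _ _ => rfl)
    ext x; simp
  simp_rw [h1]
  rw [Finset.sum_comm]
  apply Finset.sum_congr rfl
  intro x hx
  rw [mem_VF] at hx
  rw [← Finset.sum_filter, Finset.sum_const]
  congr 1
  have : (Finset.univ.erase F).filter (fun G => G ∈ c.I x) = (c.I x).erase F := by
    ext G; simp
  rw [this, Finset.card_erase_of_mem hx, c.card3]

lemma VF_card (F : Φ) :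
    (c.VF F).card = (Finset.univ.filter (fun G => G ≠ F ∧ ∃ v, F ∈ c.I v ∧ G ∈ c.I v)).card := by
  have h := c.sum_pair F (fun _ => (1 : ℕ))
  simp only [Finset.sum_const, smul_eq_mul, mul_one] at h
  have h2 : ∑ G ∈ Finset.univ.erase F, (c.Ed F G).card =
      ∑ G ∈ Finset.univ.erase F, if (∃ v, F ∈ c.I v ∧ G ∈ c.I v) then 2 else 0 := by
    apply Finset.sum_congr rfl
    intro G hG
    split_ifs with hv
    · obtain ⟨v, h1, h2⟩ := hv
      exact c.pair F G (Finset.ne_of_mem_erase hG).symm v h1 h2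
    · rw [Finset.card_eq_zero]
      ext v; simp; exact fun h1 h2 => hv ⟨v, h1, h2⟩
  rw [h2, ← Finset.sum_filter, Finset.sum_const, smul_eq_mul] at h
  have h3 : (Finset.univ.erase F).filter (fun G => ∃ v, F ∈ c.I v ∧ G ∈ c.I v) =
     (Finset.univ.filter (fun G => G ≠ F ∧ ∃ v, F ∈ c.I v ∧ G ∈ c.I v)) := by
    ext G; simp
  rw [h3] at h
  omega

lemma VF_five (F : Φ) : 5 ≤ (c.VF F).card := by rw [VF_card]; exact (c.deg F).1
lemma VF_six (F : Φ) : (c.VF F).card ≤ 6 := by rw [VF_card]; exact (c.deg F).2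

lemma D_even (X : Finset V) (F : Φ) : Even (c.D X F) := by
  have h := c.sum_pair F (fun v => if v ∈ X then (1 : ℕ) else 0)
  rw [← (ZMod.natCast_eq_zero_iff_even)]
  have h' := congrArg (fun n : ℕ => (n : ZMod 2)) h
  beta_reduce at h'
  have hr : ((∑ x ∈ c.VF F, (2 : ℕ) • (if x ∈ X then (1 : ℕ) else 0) : ℕ) : ZMod 2) = 0 := by
    rw [← Finset.smul_sum, smul_eq_mul]; push_cast
    have : (2 : ZMod 2) = 0 := by decide
    rw [this, zero_mul]
  rw [hr] at h'
  rw [← h']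
  unfold D
  rw [← Finset.add_sum_erase _ _ (Finset.mem_univ F)]
  simp only [c.not_cutp_self, if_false, zero_add]
  push_cast
  apply Finset.sum_congr rfl
  intro G hG
  have hFG := (Finset.ne_of_mem_erase hG).symm
  rcases c.Ed_cases hFG with he | ⟨v, w, hvw, he⟩
  · have : ¬ c.cutp X F G := by intro hh; have := hh.2; rw [he] at this; simp at this
    simp [he, this]
  · rw [he, Finset.sum_pair hvw.symm]
    have := c.cutp_iff (X := X) hFG hvw he
    by_cases h1 : v ∈ X <;> by_cases h2 : w ∈ X <;> simp [this, h1, h2]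
    decide

/-- A mixed facet contains a cut edge. -/
lemma cut_exists {X : Finset V} {F : Φ} (hF : F ∈ c.cut X) : ∃ G, c.cutp X F G := by
  simp only [cut, Finset.mem_filter, Finset.mem_univ, true_and] at hF
  obtain ⟨⟨a, haX, haF⟩, ⟨b, hbX, hbF⟩⟩ := hF
  obtain ⟨s, hs, hs'⟩ := Finset.exists_max_image (c.VF F ∩ X) c.h ⟨a, by simp [haX, haF]⟩
  obtain ⟨r, hr, hr'⟩ := Finset.exists_max_image (c.VF F \ X) c.h ⟨b, by simp [hbX, hbF]⟩
  simp only [Finset.mem_inter, Finset.mem_sdiff, mem_VF] at hs hs' hr hr'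
  have hsr : s ≠ r := by rintro rfl; exact hr.2 hs.2
  rcases lt_or_gt_of_ne (fun h => hsr (c.inj h)) with hlt | hlt
  · have := mt (c.loc F s hs.1) (by push Not; exact ⟨r, hr.1, hlt⟩)
    push Not at this
    obtain ⟨w, hwF, hws, ⟨G, hGF, hGs, hGw⟩, hlt'⟩ := this
    have hwX : w ∉ X := fun hwX => absurd (hs' w ⟨hwF, hwX⟩) (not_le.2 hlt')
    obtain ⟨w', hw', he⟩ := c.Ed_eq hGF.symm hs.1 hGs
    have : w ∈ c.Ed F G := by simp [hwF, hGw]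
    rw [he] at this; simp [hws] at this; subst this
    exact ⟨G, (c.cutp_iff hGF.symm hw' he).2 (Or.inl ⟨hs.2, hwX⟩)⟩
  · have := mt (c.loc F r hr.1) (by push Not; exact ⟨s, hs.1, hlt⟩)
    push Not at this
    obtain ⟨w, hwF, hws, ⟨G, hGF, hGs, hGw⟩, hlt'⟩ := this
    have hwX : w ∈ X := by
      by_contra hwX
      exact absurd (hr' w ⟨hwF, hwX⟩) (not_le.2 hlt')
    obtain ⟨w', hw', he⟩ := c.Ed_eq hGF.symm hr.1 hGs
    have : w ∈ c.Ed F G := by simp [hwF, hGw]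
    rw [he] at this; simp [hws] at this; subst this
    exact ⟨G, (c.cutp_iff hGF.symm hw' he).2 (Or.inr ⟨hr.2, hwX⟩)⟩

/-- A nontrivial vertex set has a cut edge. -/
lemma cutp_exists {X : Finset V} (h1 : X.Nonempty) (h2 : Xᶜ.Nonempty) : ∃ F G, c.cutp X F G := by
  obtain ⟨s, hs, hs'⟩ := Finset.exists_max_image X c.h h1
  obtain ⟨r, hr, hr'⟩ := Finset.exists_max_image Xᶜ c.h h2
  simp only [Finset.mem_compl] at hs hs' hr hr'
  have hsr : s ≠ r := by rintro rfl; exact hr hs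
  rcases lt_or_gt_of_ne (fun h => hsr (c.inj h)) with hlt | hlt
  · have := mt (c.glob s) (by push Not; exact ⟨r, hlt⟩)
    push Not at this
    obtain ⟨w, hws, ⟨F, G, hFG, hFs, hGs, hFw, hGw⟩, hlt'⟩ := this
    have hwX : w ∉ X := fun hwX => absurd (hs' w hwX) (not_le.2 hlt')
    obtain ⟨w', hw', he⟩ := c.Ed_eq hFG hFs hGs
    have : w ∈ c.Ed F G := by simp [hFw, hGw]
    rw [he] at this; simp [hws] at this; subst this
    exact ⟨F, G, (c.cutp_iff hFG hw' he).2 (Or.inl ⟨hs, hwX⟩)⟩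
  · have := mt (c.glob r) (by push Not; exact ⟨s, hlt⟩)
    push Not at this
    obtain ⟨w, hws, ⟨F, G, hFG, hFs, hGs, hFw, hGw⟩, hlt'⟩ := this
    have hwX : w ∈ X := by
      by_contra hwX
      exact absurd (hr' w hwX) (not_le.2 hlt')
    obtain ⟨w', hw', he⟩ := c.Ed_eq hFG hFs hGs
    have : w ∈ c.Ed F G := by simp [hFw, hGw]
    rw [he] at this; simp [hws] at this; subst this
    exact ⟨F, G, (c.cutp_iff hFG hw' he).2 (Or.inr ⟨hr, hwX⟩)⟩

lemma D_eq_card (X : Finset V) (F : Φ) :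
    c.D X F = (Finset.univ.filter (fun G => c.cutp X F G)).card := by
  unfold D; rw [Finset.card_filter]

lemma two_le_D {X : Finset V} {F : Φ} (hF : F ∈ c.cut X) : 2 ≤ c.D X F := by
  obtain ⟨G, hG⟩ := c.cut_exists hF
  have h1 : 0 < c.D X F := by
    rw [D_eq_card, Finset.card_pos]; exact ⟨G, by simpa using hG⟩
  have := c.D_even X F
  rcases this with ⟨r, hr⟩
  omega

lemma D_lt {X : Finset V} {F : Φ} (hF : F ∈ c.cut X) : c.D X F + 1 ≤ (c.cut X).card := by
  rw [D_eq_card]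
  have : (Finset.univ.filter (fun G => c.cutp X F G)) ⊆ (c.cut X).erase F := by
    intro G hG
    simp only [Finset.mem_filter, Finset.mem_univ, true_and] at hG
    exact Finset.mem_erase.2 ⟨hG.1.symm, c.cutp_mem_cut (c.cutp_symm hG)⟩
  have := Finset.card_le_card this
  rw [Finset.card_erase_of_mem hF] at this
  have : 0 < (c.cut X).card := Finset.card_pos.2 ⟨F, hF⟩
  omega

lemma D_eq_zero {X : Finset V} {F : Φ} (hF : F ∉ c.cut X) : c.D X F = 0 := by
  rw [D_eq_card, Finset.card_eq_zero, Finset.filter_eq_empty_iff]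
  exact fun G _ hG => hF (c.cutp_mem_cut hG)

lemma e2_eq (X : Finset V) : c.e2 X = ∑ F ∈ c.cut X, c.D X F := by
  unfold e2
  symm
  apply Finset.sum_subset (Finset.subset_univ _)
  intro F _ hF
  exact c.D_eq_zero hF

/-- Structure of small cuts. -/
lemma cutfacts {X : Finset V} (h1 : X.Nonempty) (h2 : Xᶜ.Nonempty) (h8 : c.e2 X ≤ 8) :
    3 ≤ (c.cut X).card ∧ (c.cut X).card ≤ 4 ∧ c.e2 X = 2 * (c.cut X).card ∧
    ∀ F ∈ c.cut X, c.D X F = 2 := by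
  obtain ⟨F, G, hFG⟩ := c.cutp_exists h1 h2
  have hF := c.cutp_mem_cut hFG
  have hK : 3 ≤ (c.cut X).card := by
    have := c.D_lt hF
    have := c.two_le_D hF
    omega
  have hlow : ∑ F ∈ c.cut X, 2 ≤ ∑ F ∈ c.cut X, c.D X F :=
    Finset.sum_le_sum (fun F hF => c.two_le_D hF)
  have hup : ∑ F ∈ c.cut X, c.D X F ≤ ∑ F ∈ c.cut X, ((c.cut X).card - 1) :=
    Finset.sum_le_sum (fun F hF => by have := c.D_lt hF; omega)
  rw [Finset.sum_const, smul_eq_mul] at hlow hup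
  rw [← e2_eq] at hlow hup
  have hK4 : (c.cut X).card ≤ 4 := by omega
  have he : c.e2 X = 2 * (c.cut X).card := by
    have : (c.cut X).card = 3 ∨ (c.cut X).card = 4 := by omega
    rcases this with h | h <;> rw [h] at hlow hup ⊢ <;> omega
  refine ⟨hK, hK4, he, ?_⟩
  intro F hF
  have heq : ∑ F ∈ c.cut X, 2 = ∑ F ∈ c.cut X, c.D X F := by
    rw [← e2_eq, he, Finset.sum_const, smul_eq_mul, mul_comm]
  exact ((Finset.sum_eq_sum_iff_of_le (fun F hF => c.two_le_D hF)).1 heq F hF).symm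

lemma cut_compl (X : Finset V) : c.cut Xᶜ = c.cut X := by
  ext F; simp only [cut, Finset.mem_filter, Finset.mem_univ, true_and, Finset.mem_compl, not_not]
  tauto

lemma cutp_compl (X : Finset V) (F G : Φ) : c.cutp Xᶜ F G ↔ c.cutp X F G := by
  by_cases hFG : F = G
  · subst hFG; simp [not_cutp_self]
  rcases c.Ed_cases hFG with he | ⟨v, w, hvw, he⟩
  · unfold cutp; simp [he]
  · rw [c.cutp_iff hFG hvw he, c.cutp_iff hFG hvw he]; simp; tauto

lemma e2_compl (X : Finset V) : c.e2 Xᶜ = c.e2 X := by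
  unfold e2 D; simp_rw [cutp_compl]

lemma t_add (X : Finset V) : c.t X + c.t Xᶜ = ∑ F ∈ c.cut X, (c.VF F).card := by
  unfold t
  rw [cut_compl, ← Finset.sum_add_distrib]
  apply Finset.sum_congr rfl
  intro F _
  rw [← Finset.sdiff_eq_inter_compl, Finset.card_inter_add_card_sdiff]

lemma t_add_le (X : Finset V) : c.t X + c.t Xᶜ ≤ 6 * (c.cut X).card := by
  rw [t_add]
  calc _ ≤ ∑ F ∈ c.cut X, 6 := Finset.sum_le_sum (fun F _ => c.VF_six F)
    _ = _ := by rw [Finset.sum_const, smul_eq_mul, mul_comm]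

lemma le_t_add (X : Finset V) : 5 * (c.cut X).card ≤ c.t X + c.t Xᶜ := by
  rw [t_add]
  calc _ = ∑ F ∈ c.cut X, 5 := by rw [Finset.sum_const, smul_eq_mul, mul_comm]
    _ ≤ _ := Finset.sum_le_sum (fun F _ => c.VF_five F)

lemma t_eq (X : Finset V) : c.t X = ∑ v ∈ X, c.cn X v := by
  unfold t cn
  have h1 : ∀ F, (c.VF F ∩ X).card = ∑ v ∈ X, if F ∈ c.I v then 1 else 0 := by
    intro F
    rw [← Finset.card_filter]; congr 1; ext v; simp [and_comm]
  have h2 : ∀ v, (c.I v ∩ c.cut X).card = ∑ F ∈ c.cut X, if F ∈ c.I v then 1 else 0 := by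
    intro v
    rw [← Finset.card_filter]; congr 1; ext v; simp [and_comm]
  simp_rw [h1, h2]
  rw [Finset.sum_comm]

lemma cn_le (X : Finset V) (v : V) : c.cn X v ≤ 3 := by
  rw [← c.card3 v]; exact Finset.card_le_card Finset.inter_subset_left

/-- Each cut edge has exactly one end in `X`. -/
lemma sum_P2 (X : Finset V) : ∑ v ∈ X, c.P2 X v = c.e2 X := by
  unfold P2 e2 D
  have h1 : ∀ v, ∑ F ∈ c.I v, ∑ G ∈ c.I v, (if c.cutp X F G then 1 else 0) =
      ∑ F, ∑ G, if (F ∈ c.I v ∧ G ∈ c.I v) ∧ c.cutp X F G then 1 else 0 := by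
    intro v
    rw [← Finset.sum_subset (Finset.subset_univ (c.I v))]
    · apply Finset.sum_congr rfl
      intro F hF
      rw [← Finset.sum_subset (Finset.subset_univ (c.I v))]
      · apply Finset.sum_congr rfl
        intro G hG
        simp [hF, hG]
      · intro G _ hG; simp [hG]
    · intro F _ hF; simp [hF]
  simp_rw [h1]
  rw [Finset.sum_comm]
  apply Finset.sum_congr rfl
  intro F _
  rw [Finset.sum_comm]
  apply Finset.sum_congr rfl
  intro G _
  by_cases hc : c.cutp X F G
  · simp only [hc, and_true, if_true]
    rw [← Finset.card_filter]
    have := hc.2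
    rw [← this]; congr 1; ext v; simp [and_comm]
  · simp [hc]

lemma P2_le_two {X : Finset V} {v : V} (h : c.cn X v ≤ 2) :
    c.P2 X v ≤ if c.cn X v = 2 then 2 else 0 := by
  have h1 : c.P2 X v = (((c.I v ∩ c.cut X).offDiag).filter (fun p => c.cutp X p.1 p.2)).card := by
    unfold P2
    rw [← Finset.sum_product', ← Finset.card_filter]
    congr 1
    ext ⟨F, G⟩
    simp only [Finset.mem_filter, Finset.mem_product, Finset.mem_offDiag, Finset.mem_inter]
    constructor
    · rintro ⟨⟨a, b⟩, h⟩
      exact ⟨⟨⟨a, c.cutp_mem_cut h⟩, ⟨b, c.cutp_mem_cut (c.cutp_symm h)⟩, h.1⟩, h⟩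
    · rintro ⟨⟨⟨a, _⟩, ⟨b, _⟩, _⟩, h⟩
      exact ⟨⟨a, b⟩, h⟩
  rw [h1]
  refine (Finset.card_filter_le _ _).trans ?_
  rw [Finset.offDiag_card]
  unfold cn at *
  split_ifs with h2
  · rw [h2]
  · have : (c.I v ∩ c.cut X).card = 0 ∨ (c.I v ∩ c.cut X).card = 1 := by omega
    rcases this with h | h <;> rw [h]

lemma P2_formula (X : Finset V) (v : V) : Even (c.P2 X v) ∧ c.P2 X v ≤ 6 := by
  obtain ⟨A, B, C, hAB, hAC, hBC, he⟩ := Finset.card_eq_three.1 (c.card3 v)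
  unfold P2
  rw [he]
  have hA : A ∉ ({B, C} : Finset Φ) := by simp [hAB, hAC]
  have hB : B ∉ ({C} : Finset Φ) := by simp [hBC]
  simp only [Finset.sum_insert hA, Finset.sum_insert hB, Finset.sum_singleton]
  have s1 := c.cutp_comm (X := X) (F := B) (G := A)
  have s2 := c.cutp_comm (X := X) (F := C) (G := A)
  have s3 := c.cutp_comm (X := X) (F := C) (G := B)
  simp only [c.not_cutp_self, s1, s2, s3, if_false]
  by_cases h1 : c.cutp X A B <;> by_cases h2 : c.cutp X A C <;> by_cases h3 : c.cutp X B C <;>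
    simp [h1, h2, h3] <;> decide

/-- Three cut facets at a vertex force at least two cut edges there. -/
lemma P2_of_cn_three {X : Finset V} {v : V} (hK : (c.cut X).card ≤ 4)
    (hD : ∀ F ∈ c.cut X, c.D X F = 2) (h3 : c.cn X v = 3) : 3 ≤ c.P2 X v := by
  have hsub : c.I v ⊆ c.cut X := by
    have : c.I v ∩ c.cut X = c.I v :=
      Finset.eq_of_subset_of_card_le Finset.inter_subset_left (by rw [c.card3]; exact h3.ge)
    exact Finset.inter_eq_left.1 this
  unfold P2
  have : ∀ F ∈ c.I v, 1 ≤ ∑ G ∈ c.I v, if c.cutp X F G then 1 else 0 := by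
    intro F hF
    by_contra hlt
    have h0 : ∑ G ∈ c.I v, (if c.cutp X F G then 1 else 0) = 0 := by omega
    rw [Finset.sum_eq_zero_iff] at h0
    have hdis : Disjoint (c.I v) (Finset.univ.filter (fun G => c.cutp X F G)) := by
      rw [Finset.disjoint_left]
      intro G hG hG'
      have := h0 G hG
      simp at hG'
      simp [hG'] at this
    have hs : (c.I v) ∪ (Finset.univ.filter (fun G => c.cutp X F G)) ⊆ c.cut X := by
      apply Finset.union_subset hsub
      intro G hG
      simp at hG
      exact c.cutp_mem_cut (c.cutp_symm hG)
    have := Finset.card_le_card hs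
    rw [Finset.card_union_of_disjoint hdis, c.card3, ← D_eq_card, hD F (hsub hF)] at this
    omega
  calc 3 = ∑ F ∈ c.I v, 1 := by simp [c.card3]
    _ ≤ _ := Finset.sum_le_sum this

/-- Effect of removing a vertex. -/
lemma e2_erase {X : Finset V} {v : V} (hv : v ∈ X) :
    c.e2 (X.erase v) + 2 * c.P2 X v = c.e2 X + 6 := by
  have h1 : ∀ F G, (if c.cutp (X.erase v) F G then 1 else 0) +
      2 * (if F ∈ c.I v then (if G ∈ c.I v then (if c.cutp X F G then 1 else 0) else 0) else 0) =
      (if c.cutp X F G then 1 else 0) +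
       (if F ∈ c.I v then (if G ∈ c.I v then (if F ≠ G then 1 else 0) else 0) else 0) := by
    intro F G
    by_cases hFG : F = G
    · subst hFG; simp [not_cutp_self]
    by_cases hb : F ∈ c.I v ∧ G ∈ c.I v
    · obtain ⟨w, hw, he⟩ := c.Ed_eq hFG hb.1 hb.2
      have a1 := c.cutp_iff (X := X) hFG hw he
      have a2 := c.cutp_iff (X := X.erase v) hFG hw he
      simp only [hb.1, hb.2, if_true, a1, a2, hv]
      by_cases hwX : w ∈ X <;> simp [hw, hwX, hFG]
    · have : c.cutp (X.erase v) F G ↔ c.cutp X F G := by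
        unfold cutp
        have : c.Ed F G ∩ X.erase v = c.Ed F G ∩ X := by
          ext x; simp only [Finset.mem_inter, mem_Ed, Finset.mem_erase]
          constructor
          · rintro ⟨a, _, b⟩; exact ⟨a, b⟩
          · rintro ⟨a, b⟩
            refine ⟨a, ?_, b⟩
            rintro rfl; exact hb a
        rw [this]
      by_cases hF : F ∈ c.I v
      · have hG : G ∉ c.I v := fun h => hb ⟨hF, h⟩
        simp [this, hG]
      · simp [this, hF]
  have h2 := Finset.sum_congr (rfl : (Finset.univ : Finset Φ) = Finset.univ)
    (fun F _ => Finset.sum_congr (rfl : (Finset.univ : Finset Φ) = Finset.univ) (fun G _ => h1 F G))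
  simp only [Finset.sum_add_distrib, ← Finset.mul_sum] at h2
  have h3 : ∀ f : Φ → Φ → ℕ, ∑ F, ∑ G, (if F ∈ c.I v then (if G ∈ c.I v then f F G else 0) else 0)
      = ∑ F ∈ c.I v, ∑ G ∈ c.I v, f F G := by
    intro f
    have : ∀ F, ∑ G, (if F ∈ c.I v then (if G ∈ c.I v then f F G else 0) else 0) =
        if F ∈ c.I v then ∑ G ∈ c.I v, f F G else 0 := by
      intro F; split_ifs <;> simp [← Finset.sum_filter]
    simp_rw [this]
    simp [← Finset.sum_filter]
  rw [h3, h3] at h2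
  have h4 : ∑ F ∈ c.I v, ∑ G ∈ c.I v, (if F ≠ G then 1 else 0) = 6 := by
    rw [← Finset.sum_product', ← Finset.card_filter]
    have : ((c.I v ×ˢ c.I v).filter (fun p => p.1 ≠ p.2)) = (c.I v).offDiag := by
      ext ⟨a, b⟩; simp [and_assoc]
    rw [this, Finset.offDiag_card, c.card3]
  rw [h4] at h2
  exact h2

end Cx

namespace Cx
variable {V Φ : Type} [Fintype V] [DecidableEq V] [Fintype Φ] [DecidableEq Φ] (c : Cx V Φ)

lemma uncut_mem {X : Finset V} {H : Φ} (hH : H ∉ c.cut X) {v w : V} (hv : v ∈ X)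
    (hHv : H ∈ c.I v) (hHw : H ∈ c.I w) : w ∈ X := by
  by_contra hw
  apply hH
  simp only [cut, Finset.mem_filter, Finset.mem_univ, true_and]
  exact ⟨⟨v, hv, hHv⟩, ⟨w, hw, hHw⟩⟩

lemma cn_add (X : Finset V) (v : V) : (c.I v \ c.cut X).card + c.cn X v = 3 := by
  unfold cn
  rw [Finset.card_sdiff_add_card_inter, c.card3]

lemma cn_zero {X : Finset V} {v : V} (h : c.cn X v = 0) {H : Φ} (hH : H ∈ c.I v) :
    H ∉ c.cut X := by
  intro h2
  unfold cn at h
  rw [Finset.card_eq_zero] at h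
  have : H ∈ c.I v ∩ c.cut X := Finset.mem_inter.2 ⟨hH, h2⟩
  rw [h] at this
  simp at this

lemma cn_le_one {X : Finset V} {v : V} {G H : Φ} (hGH : G ≠ H) (hG : G ∈ c.I v) (hH : H ∈ c.I v)
    (hG' : G ∉ c.cut X) (hH' : H ∉ c.cut X) : c.cn X v ≤ 1 := by
  have h := c.cn_add X v
  have : ({G, H} : Finset Φ) ⊆ c.I v \ c.cut X := by
    intro x hx; simp at hx; rcases hx with rfl | rfl <;> simp [*]
  have := Finset.card_le_card this
  rw [Finset.card_pair hGH] at this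
  omega

lemma low_exists {X : Finset V} (hK : (c.cut X).card ≤ 4) {H : Φ} (hH : H ∉ c.cut X) {v : V}
    (hv : v ∈ X) (hHv : H ∈ c.I v) : ∃ w ∈ X, H ∈ c.I w ∧ c.cn X w ≤ 1 := by
  by_contra hcon
  push Not at hcon
  have hsub : (Finset.univ.filter (fun G => G ≠ H ∧ ∃ v, H ∈ c.I v ∧ G ∈ c.I v)) ⊆ c.cut X := by
    intro G hG
    simp only [Finset.mem_filter, Finset.mem_univ, true_and] at hG
    obtain ⟨hGH, w, hHw, hGw⟩ := hG
    have hw := c.uncut_mem hH hv hHv hHw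
    by_contra hGc
    have := c.cn_le_one hGH hGw hHw hGc hH
    have := hcon w hw hHw
    omega
  have := Finset.card_le_card hsub
  have := (c.deg H).1
  omega

lemma P2_compl (X : Finset V) (v : V) : c.P2 Xᶜ v = c.P2 X v := by
  unfold P2; simp_rw [cutp_compl]

lemma P2_pos {X : Finset V} {v : V} (h : c.P2 X v ≠ 0) :
    ∃ F ∈ c.I v, ∃ G ∈ c.I v, c.cutp X F G := by
  unfold P2 at h
  obtain ⟨F, hF, h⟩ := Finset.exists_ne_zero_of_sum_ne_zero h
  obtain ⟨G, hG, h⟩ := Finset.exists_ne_zero_of_sum_ne_zero h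
  refine ⟨F, hF, G, hG, ?_⟩
  by_contra hc
  simp [hc] at h

lemma core {X : Finset V} (h1 : X.Nonempty) (h2 : Xᶜ.Nonempty) (h8 : c.e2 X ≤ 8)
    (ht : c.t X ≤ 3 * (c.cut X).card) (hP : ∀ v ∈ X, c.P2 X v < 3)
    (IH : ∀ X' : Finset V, X'.card < X.card → X'.Nonempty → X'ᶜ.Nonempty → c.e2 X' ≤ 8 →
      c.t X' ≤ 3 * (c.cut X').card → (c.cut X').card ≤ (c.cut X).card →
      X'.card + 2 ≤ (c.cut X').card) : False := by
  obtain ⟨hk3, hk4, he2, hD⟩ := c.cutfacts h1 h2 h8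
  set k := (c.cut X).card with hk
  have hcn : ∀ v ∈ X, c.cn X v ≤ 2 := by
    intro v hv
    have := c.cn_le X v
    by_contra hc
    have h3 : c.cn X v = 3 := by omega
    have := c.P2_of_cn_three hk4 hD h3
    have := hP v hv
    omega
  set A0 := X.filter (fun v => c.cn X v = 0) with hA0
  set A1 := X.filter (fun v => c.cn X v = 1) with hA1
  set A2 := X.filter (fun v => c.cn X v = 2) with hA2
  have htN : c.t X = A1.card + 2 * A2.card := by
    rw [t_eq, hA1, hA2, Finset.card_filter, Finset.card_filter, Finset.mul_sum,
      ← Finset.sum_add_distrib]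
    apply Finset.sum_congr rfl
    intro v hv
    have := hcn v hv
    have : c.cn X v = 0 ∨ c.cn X v = 1 ∨ c.cn X v = 2 := by omega
    rcases this with h | h | h <;> simp [h]
  have hXN : X.card = A0.card + A1.card + A2.card := by
    rw [hA0, hA1, hA2, Finset.card_filter, Finset.card_filter, Finset.card_filter,
      ← Finset.sum_add_distrib, ← Finset.sum_add_distrib, Finset.card_eq_sum_ones]
    apply Finset.sum_congr rfl
    intro v hv
    have := hcn v hv
    have : c.cn X v = 0 ∨ c.cn X v = 1 ∨ c.cn X v = 2 := by omega
    rcases this with h | h | h <;> simp [h]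
  have hN2 : k ≤ A2.card := by
    have : c.e2 X ≤ 2 * A2.card := by
      rw [← sum_P2, hA2, Finset.card_filter, Finset.mul_sum]
      apply Finset.sum_le_sum
      intro v hv
      refine (c.P2_le_two (hcn v hv)).trans ?_
      split_ifs <;> simp
    omega
  have hN1 : A1.card ≤ k := by omega
  -- a vertex of type two
  obtain ⟨v2, hv2⟩ : A2.Nonempty := Finset.card_pos.1 (by omega)
  rw [hA2, Finset.mem_filter] at hv2
  obtain ⟨H2, hH2⟩ : (c.I v2 \ c.cut X).Nonempty := by
    rw [← Finset.card_pos]; have := c.cn_add X v2; omega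
  rw [Finset.mem_sdiff] at hH2
  rcases A0.eq_empty_or_nonempty with hE | hne
  · -- no inner vertex
    have hnz : ∀ v ∈ X, c.cn X v ≠ 0 := by
      intro v hv h0
      have : v ∈ A0 := by rw [hA0, Finset.mem_filter]; exact ⟨hv, h0⟩
      rw [hE] at this; simp at this
    obtain ⟨w, hwX, hHw, hcw⟩ := c.low_exists hk4 hH2.2 hv2.1 hH2.1
    set U := Finset.univ.filter (fun H => H ∉ c.cut X ∧ ∃ v ∈ X, H ∈ c.I v) with hU
    have hIU : ∀ v ∈ X, c.I v ∩ U = c.I v \ c.cut X := by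
      intro v hv; ext H
      simp only [hU, Finset.mem_inter, Finset.mem_filter, Finset.mem_univ, true_and,
        Finset.mem_sdiff]
      constructor
      · rintro ⟨a, b, _⟩; exact ⟨a, b⟩
      · rintro ⟨a, b⟩; exact ⟨a, b, v, hv, a⟩
    have hsum : ∑ H ∈ U, (c.VF H).card + c.t X = 3 * X.card := by
      have e1 : ∀ H ∈ U, (c.VF H).card = ∑ v ∈ X, if H ∈ c.I v then 1 else 0 := by
        intro H hH
        rw [hU, Finset.mem_filter] at hH
        obtain ⟨_, hHc, v, hv, hHv⟩ := hH
        rw [← Finset.card_filter]; congr 1; ext x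
        simp only [mem_VF, Finset.mem_filter]
        exact ⟨fun hx => ⟨c.uncut_mem hHc hv hHv hx, hx⟩, fun hx => hx.2⟩
      rw [Finset.sum_congr rfl e1, Finset.sum_comm, t_eq, ← Finset.sum_add_distrib]
      have e2 : ∀ v ∈ X, ((∑ H ∈ U, if H ∈ c.I v then 1 else 0) + c.cn X v) = 3 := by
        intro v hv
        rw [← Finset.card_filter, ← c.cn_add X v, ← hIU v hv]
        congr 2
        ext H; simp [and_comm]
      rw [Finset.sum_congr rfl e2, Finset.sum_const, smul_eq_mul, mul_comm]
    have hlow : 5 * U.card ≤ ∑ H ∈ U, (c.VF H).card := by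
      calc _ = ∑ H ∈ U, 5 := by rw [Finset.sum_const, smul_eq_mul, mul_comm]
        _ ≤ _ := Finset.sum_le_sum (fun F _ => c.VF_five F)
    have hA0c : A0.card = 0 := by rw [hE]; rfl
    have hw1 : c.cn X w = 1 := by have := hnz w hwX; omega
    have hUw : 2 ≤ U.card := by
      have := Finset.card_le_card (Finset.inter_subset_right : c.I w ∩ U ⊆ U)
      rw [hIU w hwX] at this
      have := c.cn_add X w
      omega
    have hUeq : ∀ v ∈ A1, U.card = 2 → c.I v \ c.cut X = U := by
      intro v hv hU2
      rw [hA1, Finset.mem_filter] at hv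
      have := c.cn_add X v
      rw [← hIU v hv.1] at this ⊢
      apply Finset.eq_of_subset_of_card_le Finset.inter_subset_right
      omega
    have hU2 : U.card = 2 := by omega
    obtain ⟨H, H', hHH, hUHH⟩ := Finset.card_eq_two.1 hU2
    have hA1sub : A1 ⊆ c.Ed H H' := by
      intro v hv
      have := hUeq v hv hU2
      have a1 : H ∈ c.I v \ c.cut X := by rw [this, hUHH]; simp
      have a2 : H' ∈ c.I v \ c.cut X := by rw [this, hUHH]; simp
      rw [Finset.mem_sdiff] at a1 a2
      simp [a1.1, a2.1]
    have : A1.card ≤ 2 := by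
      refine (Finset.card_le_card hA1sub).trans ?_
      rcases c.Ed_cases hHH with h | ⟨a, b, hab, h⟩
      · rw [h]; simp
      · rw [h]; exact Finset.card_le_two
    omega
  · -- inner vertices
    have hA0mem : ∀ v, v ∈ A0 ↔ v ∈ X ∧ c.cn X v = 0 := by intro v; rw [hA0, Finset.mem_filter]
    have hA1mem : ∀ v, v ∈ A1 ↔ v ∈ X ∧ c.cn X v = 1 := by intro v; rw [hA1, Finset.mem_filter]
    have hA2mem : ∀ v, v ∈ A2 ↔ v ∈ X ∧ c.cn X v = 2 := by intro v; rw [hA2, Finset.mem_filter]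
    have hne' : A0ᶜ.Nonempty := by
      obtain ⟨x, hx⟩ := h2
      refine ⟨x, ?_⟩
      rw [Finset.mem_compl] at hx ⊢
      exact fun h => hx ((hA0mem x).1 h).1
    have hcutX' : ∀ H ∈ c.cut A0, H ∉ c.cut X ∧ ∃ v ∈ X, H ∈ c.I v := by
      intro H hH
      simp only [cut, Finset.mem_filter, Finset.mem_univ, true_and] at hH
      obtain ⟨⟨v, hv, hHv⟩, _⟩ := hH
      rw [hA0mem] at hv
      exact ⟨c.cn_zero hv.2 hHv, v, hv.1, hHv⟩
    have hout : ∀ G H w, c.cutp A0 G H → G ∈ c.I w → H ∈ c.I w → w ∉ A0 → w ∈ A1 := by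
      intro G H w hc hG hH hw
      obtain ⟨hGc, v, hv, hGv⟩ := hcutX' G (c.cutp_mem_cut hc)
      obtain ⟨hHc, _⟩ := hcutX' H (c.cutp_mem_cut (c.cutp_symm hc))
      have hwX := c.uncut_mem hGc hv hGv hG
      have := c.cn_le_one hc.1 hG hH hGc hHc
      rw [hA1mem]
      refine ⟨hwX, ?_⟩
      by_contra hne1
      exact hw ((hA0mem w).2 ⟨hwX, by omega⟩)
    have hA1A0 : ∀ w ∈ A1, w ∉ A0 := by
      intro w hw h0
      rw [hA1mem] at hw; rw [hA0mem] at h0; omega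
    have hP2le : ∀ w ∈ A1, c.P2 A0 w ≤ 2 := by
      intro w hw
      have hc1 : (c.I w \ c.cut X).card = 2 := by
        have := c.cn_add X w; rw [hA1mem] at hw; omega
      unfold P2
      rw [← Finset.sum_product', ← Finset.card_filter]
      calc _ ≤ (c.I w \ c.cut X).offDiag.card := by
            apply Finset.card_le_card
            rintro ⟨G, H⟩ hGH
            simp only [Finset.mem_filter, Finset.mem_product, Finset.mem_offDiag,
              Finset.mem_sdiff] at hGH ⊢
            exact ⟨⟨hGH.1.1, (hcutX' G (c.cutp_mem_cut hGH.2)).1⟩,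
              ⟨hGH.1.2, (hcutX' H (c.cutp_mem_cut (c.cutp_symm hGH.2))).1⟩, hGH.2.1⟩
        _ = 2 := by rw [Finset.offDiag_card, hc1]
    have he2' : c.e2 A0 = ∑ w ∈ A1, c.P2 A0 w := by
      rw [← e2_compl, ← sum_P2]
      simp_rw [P2_compl]
      symm
      apply Finset.sum_subset
      · intro w hw; rw [Finset.mem_compl]; exact hA1A0 w hw
      · intro w hw hw1
        rw [Finset.mem_compl] at hw
        by_contra hnz
        obtain ⟨F, hF, G, hG, hc⟩ := c.P2_pos hnz
        exact hw1 (hout F G w hc hF hG hw)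
    have hsumle : ∀ S ⊆ A1, ∑ w ∈ S, c.P2 A0 w ≤ 2 * S.card := by
      intro S hS
      calc _ ≤ ∑ w ∈ S, 2 := Finset.sum_le_sum (fun w hw => hP2le w (hS hw))
        _ = _ := by rw [Finset.sum_const, smul_eq_mul, mul_comm]
    have he8 : c.e2 A0 ≤ 8 := by
      rw [he2']; have := hsumle A1 (Finset.Subset.refl _); omega
    obtain ⟨hk3', hk4', he2'', hD'⟩ := c.cutfacts hne hne' he8
    set k' := (c.cut A0).card with hk'
    have hgood : ∀ w ∈ A1, c.P2 A0 w ≠ 0 := by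
      intro w hw h0
      have hw' := hw
      rw [hA1mem] at hw'
      have hcard : (c.I w \ c.cut X).card = 2 := by have := c.cn_add X w; omega
      obtain ⟨G, H, hGH, hset⟩ := Finset.card_eq_two.1 hcard
      have hG : G ∈ c.I w \ c.cut X := by rw [hset]; simp
      have hH : H ∈ c.I w \ c.cut X := by rw [hset]; simp
      rw [Finset.mem_sdiff] at hG hH
      obtain ⟨w', hww, hEd⟩ := c.Ed_eq hGH hG.1 hH.1
      have hw'm : w' ∈ c.Ed G H := by rw [hEd]; simp
      rw [mem_Ed] at hw'm
      have hnc : ¬ c.cutp A0 G H := by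
        intro hc
        unfold P2 at h0
        rw [Finset.sum_eq_zero_iff] at h0
        have := h0 G hG.1
        rw [Finset.sum_eq_zero_iff] at this
        have := this H hH.1
        simp [hc] at this
      have hw'0 : w' ∉ A0 := by
        intro h
        exact hnc ((c.cutp_iff hGH hww hEd).2 (Or.inr ⟨hA1A0 w hw, h⟩))
      have hw'X := c.uncut_mem hG.2 hw'.1 hG.1 hw'm.1
      have hcw' := c.cn_le_one hGH hw'm.1 hw'm.2 hG.2 hH.2
      have hcw1 : c.cn X w' = 1 := by
        by_contra h
        exact hw'0 ((hA0mem w').2 ⟨hw'X, by omega⟩)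
      have hw'1 : w' ∈ A1 := (hA1mem w').2 ⟨hw'X, hcw1⟩
      have hset' : c.I w' \ c.cut X = {G, H} := by
        symm
        apply Finset.eq_of_subset_of_card_le
        · intro x hx; simp only [Finset.mem_insert, Finset.mem_singleton] at hx
          rcases hx with rfl | rfl <;> simp [*]
        · rw [Finset.card_pair hGH]; have := c.cn_add X w'; omega
      have h0' : c.P2 A0 w' = 0 := by
        by_contra hnz
        obtain ⟨F, hF, K, hK, hc⟩ := c.P2_pos hnz
        have b1 : F ∈ c.I w' \ c.cut X :=
          Finset.mem_sdiff.2 ⟨hF, (hcutX' F (c.cutp_mem_cut hc)).1⟩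
        have b2 : K ∈ c.I w' \ c.cut X :=
          Finset.mem_sdiff.2 ⟨hK, (hcutX' K (c.cutp_mem_cut (c.cutp_symm hc))).1⟩
        rw [hset'] at b1 b2
        simp only [Finset.mem_insert, Finset.mem_singleton] at b1 b2
        rcases b1 with rfl | rfl <;> rcases b2 with rfl | rfl
        · exact hc.1 rfl
        · exact hnc hc
        · exact hnc (c.cutp_symm hc)
        · exact hc.1 rfl
      have hs : ∑ x ∈ A1, c.P2 A0 x = ∑ x ∈ (A1.erase w).erase w', c.P2 A0 x := by
        rw [← Finset.sum_erase _ h0, ← Finset.sum_erase (A1.erase w) h0']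
      have hle := hsumle ((A1.erase w).erase w')
        ((Finset.erase_subset _ _).trans (Finset.erase_subset _ _))
      rw [Finset.card_erase_of_mem (Finset.mem_erase.2 ⟨hww, hw'1⟩),
        Finset.card_erase_of_mem hw] at hle
      omega
    have hN1k : A1.card = k' := by
      have a1 := hsumle A1 (Finset.Subset.refl _)
      have a2 : ∑ w ∈ A1, 2 ≤ ∑ w ∈ A1, c.P2 A0 w := by
        apply Finset.sum_le_sum
        intro w hw
        have := hgood w hw
        obtain ⟨⟨r, hr⟩, _⟩ := c.P2_formula A0 w
        omega
      rw [Finset.sum_const, smul_eq_mul] at a2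
      omega
    -- facets at vertices of type one
    have hcut1 : ∀ w ∈ A1, c.I w ∩ c.cut A0 = c.I w \ c.cut X := by
      intro w hw
      obtain ⟨F, hF, G, hG, hc⟩ := c.P2_pos (hgood w hw)
      symm
      have hsub : ({F, G} : Finset Φ) ⊆ c.I w ∩ c.cut A0 := by
        intro x hx; simp only [Finset.mem_insert, Finset.mem_singleton] at hx
        rcases hx with rfl | rfl
        · exact Finset.mem_inter.2 ⟨hF, c.cutp_mem_cut hc⟩
        · exact Finset.mem_inter.2 ⟨hG, c.cutp_mem_cut (c.cutp_symm hc)⟩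
      have hsub2 : c.I w ∩ c.cut A0 ⊆ c.I w \ c.cut X := by
        intro x hx
        rw [Finset.mem_inter] at hx
        exact Finset.mem_sdiff.2 ⟨hx.1, (hcutX' x hx.2).1⟩
      symm
      apply Finset.eq_of_subset_of_card_le hsub2
      have := Finset.card_le_card hsub
      rw [Finset.card_pair hc.1] at this
      have := c.cn_add X w
      have := ((hA1mem w).1 hw).2
      omega
    have hcut2 : ∀ w ∈ A2, c.I w ∩ c.cut A0 = c.I w \ c.cut X := by
      intro w hw
      rw [hA2mem] at hw
      ext H
      rw [Finset.mem_inter, Finset.mem_sdiff]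
      constructor
      · rintro ⟨a, b⟩; exact ⟨a, (hcutX' H b).1⟩
      · rintro ⟨a, b⟩
        refine ⟨a, ?_⟩
        obtain ⟨u, huX, hHu, hcu⟩ := c.low_exists hk4 b hw.1 a
        by_cases h0 : c.cn X u = 0
        · simp only [cut, Finset.mem_filter, Finset.mem_univ, true_and]
          refine ⟨⟨u, (hA0mem u).2 ⟨huX, h0⟩, hHu⟩, ⟨w, ?_, a⟩⟩
          intro h; rw [hA0mem] at h; omega
        · have hu1 : u ∈ A1 := (hA1mem u).2 ⟨huX, by omega⟩
          have : H ∈ c.I u \ c.cut X := Finset.mem_sdiff.2 ⟨hHu, b⟩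
          rw [← hcut1 u hu1] at this
          exact (Finset.mem_inter.1 this).2
    have htc : c.t A0ᶜ = 2 * A1.card + A2.card := by
      rw [t_eq]
      have e1 : ∀ w ∈ A0ᶜ, c.cn A0ᶜ w = 2 * (if w ∈ A1 then 1 else 0) + if w ∈ A2 then 1 else 0 := by
        intro w hw
        rw [Finset.mem_compl] at hw
        unfold cn
        rw [cut_compl]
        by_cases hwX : w ∈ X
        · have a1 := hcn w hwX
          have a2 : c.cn X w ≠ 0 := fun h => hw ((hA0mem w).2 ⟨hwX, h⟩)
          have a3 := c.cn_add X w
          have : c.cn X w = 1 ∨ c.cn X w = 2 := by omega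
          rcases this with h | h
          · have b1 : w ∈ A1 := (hA1mem w).2 ⟨hwX, h⟩
            have b2 : w ∉ A2 := by rw [hA2mem]; omega
            rw [hcut1 w b1, if_pos b1, if_neg b2]; omega
          · have b1 : w ∈ A2 := (hA2mem w).2 ⟨hwX, h⟩
            have b2 : w ∉ A1 := by rw [hA1mem]; omega
            rw [hcut2 w b1, if_pos b1, if_neg b2]; omega
        · have b1 : w ∉ A1 := fun h => hwX ((hA1mem w).1 h).1
          have b2 : w ∉ A2 := fun h => hwX ((hA2mem w).1 h).1
          rw [if_neg b1, if_neg b2]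
          simp only [mul_zero, add_zero, Finset.card_eq_zero]
          ext H
          simp only [Finset.mem_inter, Finset.notMem_empty, iff_false]
          rintro ⟨a, b⟩
          obtain ⟨p, v, hv, hHv⟩ := hcutX' H b
          exact hwX (c.uncut_mem p hv hHv a)
      rw [Finset.sum_congr rfl e1, Finset.sum_add_distrib, ← Finset.mul_sum, ← Finset.card_filter,
        ← Finset.card_filter]
      have q1 : A0ᶜ.filter (fun w => w ∈ A1) = A1 := by
        ext w; simp only [Finset.mem_filter, Finset.mem_compl]
        exact ⟨fun h => h.2, fun h => ⟨hA1A0 w h, h⟩⟩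
      have q2 : A0ᶜ.filter (fun w => w ∈ A2) = A2 := by
        ext w; simp only [Finset.mem_filter, Finset.mem_compl]
        refine ⟨fun h => h.2, fun h => ⟨?_, h⟩⟩
        rw [hA2mem] at h; rw [hA0mem]; omega
      rw [q1, q2]
    have u1 := c.t_add_le A0
    have u2 := c.le_t_add A0
    have hlt : A0.card < X.card := by omega
    have hIH := IH A0 hlt hne hne' he8 (by omega) (by omega)
    have hle3 : c.t A0 ≤ 3 * A0.card := by
      rw [t_eq]
      calc _ ≤ ∑ w ∈ A0, 3 := Finset.sum_le_sum (fun w _ => c.cn_le A0 w)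
        _ = _ := by rw [Finset.sum_const, smul_eq_mul, mul_comm]
    omega

end Cx

namespace Cx
variable {V Φ : Type} [Fintype V] [DecidableEq V] [Fintype Φ] [DecidableEq Φ] (c : Cx V Φ)

lemma claim3 : ∀ n : ℕ, ∀ X : Finset V, X.card = n → X.Nonempty → Xᶜ.Nonempty → c.e2 X ≤ 8 →
    c.t X ≤ 3 * (c.cut X).card → (c.cut X).card ≤ 3 → X.card + 2 ≤ (c.cut X).card := by
  intro n
  induction n using Nat.strong_induction_on with
  | _ n ih =>
    intro X hn h1 h2 h8 ht h3
    by_cases hP : ∀ v ∈ X, c.P2 X v < 3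
    · exfalso
      refine c.core h1 h2 h8 ht hP ?_
      intro X' hlt a1 a2 a3 a4 a5
      exact ih X'.card (by omega) X' rfl a1 a2 a3 a4 (by omega)
    · push Not at hP
      obtain ⟨v, hv, hPv⟩ := hP
      obtain ⟨k3, k4, he, -⟩ := c.cutfacts h1 h2 h8
      have her := c.e2_erase hv
      obtain ⟨⟨r, hr⟩, h6⟩ := c.P2_formula X v
      rcases (X.erase v).eq_empty_or_nonempty with hE | hE
      · have := Finset.card_erase_of_mem hv
        rw [hE] at this
        have : 0 < X.card := Finset.card_pos.2 h1
        simp at *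
        omega
      · have hZ : (X.erase v)ᶜ.Nonempty := ⟨v, by simp⟩
        have := c.cutfacts hE hZ (by omega)
        omega

lemma claim4 : ∀ n : ℕ, ∀ X : Finset V, X.card = n → X.Nonempty → Xᶜ.Nonempty → c.e2 X ≤ 8 →
    c.t X ≤ 3 * (c.cut X).card → X.card + 2 ≤ (c.cut X).card := by
  intro n
  induction n using Nat.strong_induction_on with
  | _ n ih =>
    intro X hn h1 h2 h8 ht
    by_cases h3 : (c.cut X).card ≤ 3
    · exact c.claim3 n X hn h1 h2 h8 ht h3
    by_cases hP : ∀ v ∈ X, c.P2 X v < 3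
    · exfalso
      refine c.core h1 h2 h8 ht hP ?_
      intro X' hlt a1 a2 a3 a4 a5
      exact ih X'.card (by omega) X' rfl a1 a2 a3 a4
    · push Not at hP
      obtain ⟨v, hv, hPv⟩ := hP
      obtain ⟨k3, k4, he, -⟩ := c.cutfacts h1 h2 h8
      have her := c.e2_erase hv
      obtain ⟨⟨r, hr⟩, h6⟩ := c.P2_formula X v
      have hce := Finset.card_erase_of_mem hv
      have hXpos : 0 < X.card := Finset.card_pos.2 h1
      rcases (X.erase v).eq_empty_or_nonempty with hE | hE
      · rw [hE] at hce
        simp at hce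
        omega
      · have hZ : (X.erase v)ᶜ.Nonempty := ⟨v, by simp⟩
        obtain ⟨z3, z4, ze, -⟩ := c.cutfacts hE hZ (by omega)
        have hadd := c.t_add_le (X.erase v)
        by_cases htZ : c.t (X.erase v) ≤ 3 * (c.cut (X.erase v)).card
        · have := c.claim3 _ (X.erase v) rfl hE hZ (by omega) htZ (by omega)
          omega
        · have := c.claim3 _ (X.erase v)ᶜ rfl hZ (by rwa [compl_compl]) (by rw [e2_compl]; omega)
            (by rw [cut_compl]; omega) (by rw [cut_compl]; omega)
          rw [cut_compl] at this
          have hsub : insert v Xᶜ ⊆ (X.erase v)ᶜ := by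
            intro x hx; simp at hx ⊢; tauto
          have hc := Finset.card_le_card hsub
          rw [Finset.card_insert_of_notMem (by simpa using hv)] at hc
          have := Finset.card_pos.2 h2
          omega

lemma coc_step (M : Φ → Φ → ZMod 2) (hM0 : ∀ F G, F ≠ G → c.Ed F G = ∅ → M F G = 0)
    (hsum : ∀ F, ∑ G ∈ Finset.univ.erase F, M F G = 0)
    (S : Finset V) (hS : ∀ v ∈ S, ∀ w, c.h w ≤ c.h v → w ∈ S) (v : V) (hv : v ∈ S)
    (hmax : ∀ w ∈ S, c.h w ≤ c.h v)
    (f : V → ZMod 2) (hf : ∀ x ∈ S.erase v, ∀ y ∈ S.erase v, x ≠ y → ∀ F G, F ≠ G → F ∈ c.I x →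
      G ∈ c.I x → F ∈ c.I y → G ∈ c.I y → f x + f y = M F G)
    (A B C : Φ) (hAB : A ≠ B) (hAC : A ≠ C) (hBC : B ≠ C)
    (hA : A ∈ c.I v) (hB : B ∈ c.I v) (hC : C ∈ c.I v)
    (w w0 : V) (hw : w ∈ S.erase v) (hw0 : w0 ∈ S.erase v)
    (hwA : A ∈ c.I w) (hwB : B ∈ c.I w) (hw0A : A ∈ c.I w0) (hw0C : C ∈ c.I w0) :
    (f w + M A B) + (f w0 + M A C) = 0 := by
  rw [Finset.mem_erase] at hw hw0
  have hI : c.I v = {A, B, C} := by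
    symm
    apply Finset.eq_of_subset_of_card_le
    · intro x hx; simp only [Finset.mem_insert, Finset.mem_singleton] at hx
      rcases hx with rfl | rfl | rfl <;> assumption
    · rw [c.card3, Finset.card_eq_three.2 ⟨A, B, C, hAB, hAC, hBC, rfl⟩]
  have hEB : c.Ed A B = {v, w} := by
    obtain ⟨x, hx, he⟩ := c.Ed_eq hAB hA hB
    have : w ∈ c.Ed A B := by simp [hwA, hwB]
    rw [he] at this; simp [hw.1] at this; rw [he, this]
  have hEC : c.Ed A C = {v, w0} := by
    obtain ⟨x, hx, he⟩ := c.Ed_eq hAC hA hC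
    have : w0 ∈ c.Ed A C := by simp [hw0A, hw0C]
    rw [he] at this; simp [hw0.1] at this; rw [he, this]
  have hloc : ∀ u, A ∈ c.I u → u ∈ S := by
    intro u hu
    refine hS v hv u (c.loc A v hA ?_ u hu)
    rintro x hxA hxv ⟨G, hGA, hGv, hGx⟩
    rw [hI] at hGv
    simp only [Finset.mem_insert, Finset.mem_singleton] at hGv
    rcases hGv with rfl | rfl | rfl
    · exact absurd rfl hGA
    · have : x ∈ c.Ed A G := by simp [hxA, hGx]
      rw [hEB] at this; simp [hxv] at this; rw [this]; exact hmax w hw.2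
    · have : x ∈ c.Ed A G := by simp [hxA, hGx]
      rw [hEC] at this; simp [hxv] at this; rw [this]; exact hmax w0 hw0.2
  set g := Function.update f v 0 with hg
  have hs := c.sum_pair A g
  have h0 : ∑ x ∈ c.VF A, (2 : ℕ) • g x = 0 := by
    apply Finset.sum_eq_zero
    intro x _
    rw [two_nsmul]; exact CharTwo.add_self_eq_zero _
  rw [h0] at hs
  have hs2 : ∑ G ∈ Finset.univ.erase A, (∑ x ∈ c.Ed A G, g x + M A G) = 0 := by
    rw [Finset.sum_add_distrib, hs, hsum A, add_zero]
  have hBm : B ∈ Finset.univ.erase A := by simp [hAB.symm]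
  have hCm : C ∈ (Finset.univ.erase A).erase B := by simp [hAC.symm, hBC.symm]
  rw [← Finset.add_sum_erase _ _ hBm, ← Finset.add_sum_erase _ _ hCm] at hs2
  have hrest : ∑ G ∈ ((Finset.univ.erase A).erase B).erase C,
      (∑ x ∈ c.Ed A G, g x + M A G) = 0 := by
    apply Finset.sum_eq_zero
    intro G hG
    simp only [Finset.mem_erase, Finset.mem_univ, and_true] at hG
    obtain ⟨hGC, hGB, hGA⟩ := hG
    have hGv : G ∉ c.I v := by rw [hI]; simp [hGC, hGB, hGA]
    rcases c.Ed_cases (Ne.symm hGA) with he | ⟨a, b, hab, he⟩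
    · rw [he, hM0 A G (Ne.symm hGA) he]; simp
    · have ha : a ∈ c.Ed A G := by rw [he]; simp
      have hb : b ∈ c.Ed A G := by rw [he]; simp
      rw [mem_Ed] at ha hb
      have hav : a ≠ v := by rintro rfl; exact hGv ha.2
      have hbv : b ≠ v := by rintro rfl; exact hGv hb.2
      rw [he, Finset.sum_pair hab.symm]
      have e1 : g a = f a := by rw [hg, Function.update_of_ne hav]
      have e2 : g b = f b := by rw [hg, Function.update_of_ne hbv]
      rw [e1, e2, hf a (Finset.mem_erase.2 ⟨hav, hloc a ha.1⟩) b
        (Finset.mem_erase.2 ⟨hbv, hloc b hb.1⟩) hab.symm A G (Ne.symm hGA) ha.1 ha.2 hb.1 hb.2]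
      exact CharTwo.add_self_eq_zero _
  rw [hrest, add_zero, hEB, hEC, Finset.sum_pair hw.1.symm, Finset.sum_pair hw0.1.symm] at hs2
  have e1 : g v = 0 := by rw [hg, Function.update_self]
  have e2 : g w = f w := by rw [hg, Function.update_of_ne hw.1]
  have e3 : g w0 = f w0 := by rw [hg, Function.update_of_ne hw0.1]
  rw [e1, e2, e3, zero_add, zero_add] at hs2
  exact hs2

lemma coc (M : Φ → Φ → ZMod 2) (hsymm : ∀ F G, M F G = M G F)
    (hM0 : ∀ F G, F ≠ G → c.Ed F G = ∅ → M F G = 0)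
    (hsum : ∀ F, ∑ G ∈ Finset.univ.erase F, M F G = 0) :
    ∀ n : ℕ, ∀ S : Finset V, S.card = n → (∀ v ∈ S, ∀ w, c.h w ≤ c.h v → w ∈ S) →
    ∃ f : V → ZMod 2, ∀ x ∈ S, ∀ y ∈ S, x ≠ y → ∀ F G, F ≠ G → F ∈ c.I x →
      G ∈ c.I x → F ∈ c.I y → G ∈ c.I y → f x + f y = M F G := by
  intro n
  induction n with
  | zero =>
    intro S hS _
    rw [Finset.card_eq_zero] at hS
    subst hS
    exact ⟨fun _ => 0, by simp⟩
  | succ n ih =>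
    intro S hn hS
    obtain ⟨v, hv, hmax⟩ := Finset.exists_max_image S c.h (Finset.card_pos.1 (by omega))
    have hce := Finset.card_erase_of_mem hv
    obtain ⟨f, hf⟩ := ih (S.erase v) (by omega) (by
      intro x hx w hw
      rw [Finset.mem_erase] at hx ⊢
      refine ⟨?_, hS x hx.2 w hw⟩
      rintro rfl
      exact hx.1 (c.inj (le_antisymm (hmax x hx.2) hw)))
    -- it suffices to find the value at v
    suffices hval : ∃ a : ZMod 2, ∀ y ∈ S.erase v, ∀ F G, F ≠ G → F ∈ c.I v →
      G ∈ c.I v → F ∈ c.I y → G ∈ c.I y → a + f y = M F G by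
      obtain ⟨a, ha⟩ := hval
      refine ⟨Function.update f v a, ?_⟩
      intro x hx y hy hxy F G hFG h1 h2 h3 h4
      by_cases hxv : x = v
      · subst hxv
        rw [Function.update_self, Function.update_of_ne hxy.symm]
        exact ha y (Finset.mem_erase.2 ⟨hxy.symm, hy⟩) F G hFG h1 h2 h3 h4
      · by_cases hyv : y = v
        · subst hyv
          rw [Function.update_self, Function.update_of_ne hxy, add_comm]
          exact ha x (Finset.mem_erase.2 ⟨hxy, hx⟩) F G hFG h3 h4 h1 h2
        · rw [Function.update_of_ne hxv, Function.update_of_ne hyv]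
          exact hf x (Finset.mem_erase.2 ⟨hxv, hx⟩) y (Finset.mem_erase.2 ⟨hyv, hy⟩) hxy F G hFG
            h1 h2 h3 h4
    by_cases hex : ∃ y ∈ S.erase v, ∃ F G, F ≠ G ∧ F ∈ c.I v ∧
      G ∈ c.I v ∧ F ∈ c.I y ∧ G ∈ c.I y
    · obtain ⟨y0, hy0, F0, G0, hFG0, hF0v, hG0v, hF0y, hG0y⟩ := hex
      refine ⟨f y0 + M F0 G0, ?_⟩
      intro y hy F G hFG hFv hGv hFy hGy
      have key := c.coc_step M hM0 hsum S hS v hv hmax f hf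
      have same : c.Ed F G = c.Ed F0 G0 → y = y0 := by
        intro he
        obtain ⟨x, hx, he'⟩ := c.Ed_eq hFG hFv hGv
        have a1 : y ∈ c.Ed F G := by simp [hFy, hGy]
        have a2 : y0 ∈ c.Ed F G := by rw [he]; simp [hF0y, hG0y]
        rw [he'] at a1 a2
        simp [(Finset.mem_erase.1 hy).1] at a1
        simp [(Finset.mem_erase.1 hy0).1] at a2
        rw [a1, a2]
      have fin1 : ∀ a b p q : ZMod 2, (a + p) + (b + q) = 0 → b + q + a = p := by decide
      have fin2 : ∀ a p : ZMod 2, a + p + a = p := by decide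
      by_cases e1 : F = F0
      · subst e1
        by_cases e2 : G = G0
        · subst e2; rw [same rfl]; exact fin2 _ _
        · exact fin1 _ _ _ _ (key F G G0 hFG hFG0 e2 hFv hGv hG0v y y0 hy hy0 hFy hGy hF0y hG0y)
      by_cases e2 : F = G0
      · subst e2
        rw [hsymm F0 F]
        by_cases e3 : G = F0
        · subst e3; rw [same (c.Ed_symm _ _)]; exact fin2 _ _
        · exact fin1 _ _ _ _ (key F G F0 hFG (Ne.symm hFG0) e3 hFv hGv hF0v y y0 hy hy0 hFy hGy
            hG0y hF0y)
      rw [hsymm F G]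
      by_cases e3 : G = F0
      · subst e3
        exact fin1 _ _ _ _ (key G F G0 hFG.symm hFG0 e2 hGv hFv hG0v y y0 hy hy0 hGy hFy hF0y hG0y)
      by_cases e4 : G = G0
      · subst e4
        rw [hsymm F0 G]
        exact fin1 _ _ _ _ (key G F F0 hFG.symm hFG0.symm e1 hGv hFv hF0v y y0 hy hy0 hGy hFy
          hG0y hF0y)
      exfalso
      have hsub : ({F, G, F0, G0} : Finset Φ) ⊆ c.I v := by
        intro x hx; simp only [Finset.mem_insert, Finset.mem_singleton] at hx
        rcases hx with rfl | rfl | rfl | rfl <;> assumption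
      have hcard : ({F, G, F0, G0} : Finset Φ).card = 4 := by
        rw [Finset.card_insert_of_notMem (by simp [hFG, e1, e2]),
          Finset.card_insert_of_notMem (by simp [e3, e4]), Finset.card_pair hFG0]
      have := Finset.card_le_card hsub
      rw [hcard, c.card3] at this
      omega
    · refine ⟨0, ?_⟩
      intro y hy F G hFG hFv hGv hFy hGy
      exact absurd ⟨y, hy, F, G, hFG, hFv, hGv, hFy, hGy⟩ hex

lemma exists_cut (M : Φ → Φ → Prop) [∀ F G, Decidable (M F G)] (hsymm : ∀ F G, M F G → M G F)
    (hM : ∀ F G, M F G → F ≠ G ∧ (c.Ed F G).Nonempty)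
    (hev : ∀ F, Even (Finset.univ.filter (fun G => M F G)).card) :
    ∃ X : Finset V, ∀ F G, c.cutp X F G ↔ M F G := by
  obtain ⟨f, hf⟩ := c.coc (fun F G => if M F G then 1 else 0)
    (fun F G => by
      have : M F G ↔ M G F := ⟨hsymm F G, hsymm G F⟩
      simp [this])
    (fun F G _ he => by
      have : ¬ M F G := fun h => by have := (hM F G h).2; rw [he] at this; simp at this
      simp [this])
    (fun F => by
      have h1 := (ZMod.natCast_eq_zero_iff_even).2 (hev F)
      rw [Finset.card_filter, ← Finset.add_sum_erase _ _ (Finset.mem_univ F)] at h1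
      have : ¬ M F F := fun h => (hM F F h).1 rfl
      rw [if_neg this, zero_add] at h1
      push_cast at h1
      exact h1) _ Finset.univ rfl (by simp)
  refine ⟨Finset.univ.filter (fun v => f v = 1), ?_⟩
  intro F G
  by_cases hFG : F = G
  · subst hFG
    exact ⟨fun h => absurd rfl h.1, fun h => absurd rfl (hM _ _ h).1⟩
  rcases c.Ed_cases hFG with he | ⟨a, b, hab, he⟩
  · constructor
    · intro h; have := h.2; rw [he] at this; simp at this
    · intro h; have := (hM F G h).2; rw [he] at this; simp at this
  · have ha : a ∈ c.Ed F G := by rw [he]; simp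
    have hb : b ∈ c.Ed F G := by rw [he]; simp
    rw [mem_Ed] at ha hb
    have := hf a (Finset.mem_univ _) b (Finset.mem_univ _) hab.symm F G hFG ha.1 ha.2 hb.1 hb.2
    rw [c.cutp_iff hFG hab he]
    simp only [Finset.mem_filter, Finset.mem_univ, true_and]
    have d1 : ∀ p q : ZMod 2, p + q = 1 → (p = 1 ∧ ¬ q = 1) ∨ (¬ p = 1 ∧ q = 1) := by decide
    have d2 : ∀ p q : ZMod 2, p + q = 0 → ¬ ((p = 1 ∧ ¬ q = 1) ∨ (¬ p = 1 ∧ q = 1)) := by decide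
    by_cases hm : M F G
    · rw [if_pos hm] at this
      exact ⟨fun _ => hm, fun _ => d1 _ _ this⟩
    · rw [if_neg hm] at this
      exact ⟨fun h => absurd h (d2 _ _ this), fun h => absurd h hm⟩

/-- Small even edge sets cut off very few vertices. -/
lemma exists_small (M : Φ → Φ → Prop) [∀ F G, Decidable (M F G)] (hsymm : ∀ F G, M F G → M G F)
    (hM : ∀ F G, M F G → F ≠ G ∧ (c.Ed F G).Nonempty)
    (hev : ∀ F, Even (Finset.univ.filter (fun G => M F G)).card) (K : ℕ)
    (hK : ∑ F, (Finset.univ.filter (fun G => M F G)).card = 2 * K) (hK4 : K ≤ 4)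
    (hne : ∃ F G, M F G) :
    ∃ Y : Finset V, Y.card + 2 ≤ K ∧ ∀ F G, M F G → ∃ v ∈ Y, F ∈ c.I v ∧ G ∈ c.I v := by
  obtain ⟨X, hX⟩ := c.exists_cut M hsymm hM hev
  have he2 : c.e2 X = 2 * K := by
    rw [← hK]; unfold e2
    apply Finset.sum_congr rfl
    intro F _
    rw [D_eq_card]; congr 1; ext G; simp [hX]
  obtain ⟨F, G, hFG⟩ := hne
  obtain ⟨v, w, hv, hw, he⟩ := c.cutp_ends ((hX F G).2 hFG)
  have h1 : X.Nonempty := ⟨v, hv⟩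
  have h2 : Xᶜ.Nonempty := ⟨w, by simpa using hw⟩
  obtain ⟨k3, k4, ke, -⟩ := c.cutfacts h1 h2 (by omega)
  have hadd := c.t_add_le X
  have fin : ∀ Y : Finset V, (∀ F G, c.cutp Y F G ↔ M F G) → ∀ F G, M F G →
      ∃ v ∈ Y, F ∈ c.I v ∧ G ∈ c.I v := by
    intro Y hY F G hm
    obtain ⟨v, w, hv, hw, he⟩ := c.cutp_ends ((hY F G).2 hm)
    have : v ∈ c.Ed F G := by rw [he]; simp
    rw [mem_Ed] at this
    exact ⟨v, hv, this⟩
  by_cases ht : c.t X ≤ 3 * (c.cut X).card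
  · have := c.claim4 _ X rfl h1 h2 (by omega) ht
    exact ⟨X, by omega, fin X hX⟩
  · have := c.claim4 _ Xᶜ rfl h2 (by rwa [compl_compl]) (by rw [e2_compl]; omega)
      (by rw [cut_compl]; omega)
    rw [cut_compl] at this
    exact ⟨Xᶜ, by omega, fin Xᶜ (fun F G => by rw [cutp_compl]; exact hX F G)⟩

/-- No 3-belts. -/
lemma no3 {A B C : Φ} (hAB : A ≠ B) (hAC : A ≠ C) (hBC : B ≠ C)
    (e1 : (c.Ed A B).Nonempty) (e2 : (c.Ed A C).Nonempty) (e3 : (c.Ed B C).Nonempty) :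
    ∃ v, A ∈ c.I v ∧ B ∈ c.I v ∧ C ∈ c.I v := by
  set T : Finset Φ := {A, B, C} with hT
  have hT3 : T.card = 3 := Finset.card_eq_three.2 ⟨A, B, C, hAB, hAC, hBC, rfl⟩
  have hfil : ∀ F, (Finset.univ.filter (fun G => F ≠ G ∧ F ∈ T ∧ G ∈ T)).card =
      if F ∈ T then 2 else 0 := by
    intro F
    split_ifs with h
    · have : (Finset.univ.filter (fun G => F ≠ G ∧ F ∈ T ∧ G ∈ T)) = T.erase F := by
        ext G; simp [h, eq_comm]
      rw [this, Finset.card_erase_of_mem h, hT3]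
    · simp [h]
  obtain ⟨Y, hY, hm⟩ := c.exists_small (fun F G => F ≠ G ∧ F ∈ T ∧ G ∈ T)
    (fun F G h => ⟨h.1.symm, h.2.2, h.2.1⟩)
    (fun F G h => by
      refine ⟨h.1, ?_⟩
      obtain ⟨h1, h2, h3⟩ := h
      simp only [hT, Finset.mem_insert, Finset.mem_singleton] at h2 h3
      rcases h2 with rfl | rfl | rfl <;> rcases h3 with rfl | rfl | rfl <;>
        first | exact absurd rfl h1 | assumption | (rw [Ed_symm]; assumption))
    (fun F => by rw [hfil]; split_ifs <;> decide) 3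
    (by simp_rw [hfil]; rw [← Finset.sum_filter]; simp [hT3]) (by norm_num)
    ⟨A, B, hAB, by simp [hT], by simp [hT]⟩
  obtain ⟨v, hv, hA, hB⟩ := hm A B ⟨hAB, by simp [hT], by simp [hT]⟩
  obtain ⟨w, hw, _, hC⟩ := hm A C ⟨hAC, by simp [hT], by simp [hT]⟩
  have : v = w := Finset.card_le_one.1 (by omega) v hv w hw
  subst this
  exact ⟨v, hA, hB, hC⟩

/-- No 4-belts. -/
lemma no4 {A B C D : Φ} (hAC : A ≠ C) (hBD : B ≠ D)
    (e1 : (c.Ed A B).Nonempty) (e2 : (c.Ed B C).Nonempty) (e3 : (c.Ed C D).Nonempty)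
    (e4 : (c.Ed D A).Nonempty) (e5 : c.Ed A C = ∅) (e6 : c.Ed B D = ∅) : False := by
  have hne : ∀ {F G : Φ} {v : V}, c.Ed F G = ∅ → F ∈ c.I v → G ∈ c.I v → False := by
    intro F G v h a b
    have : v ∈ c.Ed F G := by simp [a, b]
    rw [h] at this; simp at this
  have sub : ∀ {F G : Φ}, (c.Ed F G).Nonempty → F = G → ∀ H, c.Ed F H = ∅ ∨ c.Ed G H = ∅ →
      (c.Ed H F).Nonempty ∨ (c.Ed H G).Nonempty → False := by
    rintro F G h rfl H h2 h3
    simp only [or_self] at h2 h3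
    rw [Ed_symm, h2] at h3; simp at h3
  have hAB : A ≠ B := fun h => sub e1 h C (Or.inl e5) (Or.inr (by rwa [Ed_symm]))
  have hBC : B ≠ C := fun h => sub e2 h D (Or.inl e6) (Or.inr (by rwa [Ed_symm]))
  have hCD : C ≠ D := fun h => sub e3 h A (Or.inl (by rwa [Ed_symm])) (Or.inr (by rwa [Ed_symm]))
  have hDA : D ≠ A := fun h => sub e4 h B (Or.inl (by rwa [Ed_symm])) (Or.inr (by rwa [Ed_symm]))
  set T : Finset Φ := {A, C} with hT
  set T' : Finset Φ := {B, D} with hT'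
  have hdis : ∀ F, F ∈ T → F ∉ T' := by
    intro F h h'
    simp only [hT, hT', Finset.mem_insert, Finset.mem_singleton] at h h'
    rcases h with rfl | rfl <;> rcases h' with h | h
    · exact hAB h
    · exact hDA h.symm
    · exact hBC h.symm
    · exact hCD h
  have hT2 : T.card = 2 := Finset.card_pair hAC
  have hT2' : T'.card = 2 := Finset.card_pair hBD
  have hfil : ∀ F, (Finset.univ.filter
      (fun G => (F ∈ T ∧ G ∈ T') ∨ (F ∈ T' ∧ G ∈ T))).card =
      (if F ∈ T then 2 else 0) + (if F ∈ T' then 2 else 0) := by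
    intro F
    by_cases h : F ∈ T
    · have h' := hdis F h
      have : (Finset.univ.filter (fun G => (F ∈ T ∧ G ∈ T') ∨ (F ∈ T' ∧ G ∈ T))) = T' := by
        ext G; simp [h, h']
      rw [this, hT2', if_pos h, if_neg h']
    · by_cases h' : F ∈ T'
      · have : (Finset.univ.filter (fun G => (F ∈ T ∧ G ∈ T') ∨ (F ∈ T' ∧ G ∈ T))) = T := by
          ext G; simp [h, h']
        rw [this, hT2, if_pos h', if_neg h]
      · simp [h, h']
  have hmem : ∀ F ∈ T, ∀ G ∈ T', (c.Ed F G).Nonempty := by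
    intro F hF G hG
    simp only [hT, hT', Finset.mem_insert, Finset.mem_singleton] at hF hG
    rcases hF with rfl | rfl <;> rcases hG with rfl | rfl <;>
        first | assumption | (rw [Ed_symm]; assumption)
  obtain ⟨Y, hY, hm⟩ := c.exists_small (fun F G => (F ∈ T ∧ G ∈ T') ∨ (F ∈ T' ∧ G ∈ T))
    (fun F G h => by tauto)
    (fun F G h => by
      rcases h with ⟨h1, h2⟩ | ⟨h1, h2⟩
      · refine ⟨?_, hmem F h1 G h2⟩
        rintro rfl; exact hdis _ h1 h2
      · refine ⟨?_, by rw [Ed_symm]; exact hmem G h2 F h1⟩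
        rintro rfl; exact hdis _ h2 h1)
    (fun F => by rw [hfil]; split_ifs <;> decide) 4
    (by
      simp_rw [hfil]
      rw [Finset.sum_add_distrib, ← Finset.sum_filter, ← Finset.sum_filter]
      simp [hT2, hT2']) le_rfl
    ⟨A, B, Or.inl ⟨by simp [hT], by simp [hT']⟩⟩
  obtain ⟨x, hx, hxA, hxB⟩ := hm A B (Or.inl ⟨by simp [hT], by simp [hT']⟩)
  obtain ⟨y, hy, hyC, hyB⟩ := hm C B (Or.inl ⟨by simp [hT], by simp [hT']⟩)
  obtain ⟨z, hz, hzC, hzD⟩ := hm C D (Or.inl ⟨by simp [hT], by simp [hT']⟩)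
  have xy : x ≠ y := by rintro rfl; exact hne e5 hxA hyC
  have xz : x ≠ z := by rintro rfl; exact hne e5 hxA hzC
  have yz : y ≠ z := by rintro rfl; exact hne e6 hyB hzD
  have hsub : ({x, y, z} : Finset V) ⊆ Y := by
    intro a ha; simp only [Finset.mem_insert, Finset.mem_singleton] at ha
    rcases ha with rfl | rfl | rfl <;> assumption
  have := Finset.card_le_card hsub
  rw [Finset.card_eq_three.2 ⟨x, y, z, xy, xz, yz, rfl⟩] at this
  omega

end Cx

lemma relint_prop {F : Set E3} {x y : E3} (hx : x ∈ intrinsicInterior ℝ F)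
    (hy : y ∈ affineSpan ℝ F) : ∃ ε > 0, ∀ s : ℝ, |s| ≤ ε → x + s • (y - x) ∈ F := by
  rw [mem_intrinsicInterior] at hx
  obtain ⟨x', hx', rfl⟩ := hx
  have hmem : ∀ s : ℝ, (x' : E3) + s • (y - x') ∈ affineSpan ℝ F := by
    intro s
    have := AffineMap.lineMap_mem s x'.2 hy
    rw [AffineMap.lineMap_apply] at this
    simpa [add_comm] using this
  let g : ℝ → affineSpan ℝ F := fun s => ⟨(x' : E3) + s • (y - x'), hmem s⟩
  have hg : Continuous g := by
    apply Continuous.subtype_mk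
    fun_prop
  have h0 : g 0 = x' := by apply Subtype.ext; simp [g]
  have hopen : IsOpen (g ⁻¹' (interior (Subtype.val ⁻¹' F))) := isOpen_interior.preimage hg
  have h0m : (0 : ℝ) ∈ g ⁻¹' (interior (Subtype.val ⁻¹' F)) := by
    rw [mem_preimage, h0]; exact hx'
  obtain ⟨ε, hε, hb⟩ := Metric.isOpen_iff.1 hopen 0 h0m
  refine ⟨ε / 2, by positivity, ?_⟩
  intro s hs
  have : s ∈ Metric.ball (0 : ℝ) ε := by
    rw [Metric.mem_ball, Real.dist_eq, sub_zero]; linarith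
  have h' := hb this
  have h2 : g s ∈ (Subtype.val ⁻¹' F : Set (affineSpan ℝ F)) := interior_subset h'
  exact h2

lemma ext_of_relint {P F : Set E3} (hE : IsExtreme ℝ P F) {x y : E3}
    (hx : x ∈ intrinsicInterior ℝ F) (hy : y ∈ affineSpan ℝ F) (hyP : y ∈ P) : y ∈ F := by
  obtain ⟨ε, hε, h⟩ := relint_prop hx hy
  have h1 := h (-ε) (by rw [abs_neg, abs_of_pos hε])
  have hxF : x ∈ F := intrinsicInterior_subset hx
  refine hE.2 hyP (hE.1 h1) hxF ?_
  refine ⟨ε / (1 + ε), 1 / (1 + ε), by positivity, by positivity, by field_simp; ring, ?_⟩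
  match_scalars <;> field_simp <;> ring

/-- Faces of equal dimension coincide. -/
lemma face_eq {P F G : Set E3} (hE : IsExtreme ℝ P F) (hc : Convex ℝ F) (hne : F.Nonempty)
    (hFG : F ⊆ G) (hGP : G ⊆ P) (hd : setDim G ≤ setDim F) : F = G := by
  refine Subset.antisymm hFG ?_
  intro y hy
  obtain ⟨x, hx⟩ := hne.intrinsicInterior hc
  have hv : vectorSpan ℝ F = vectorSpan ℝ G := by
    apply Submodule.eq_of_le_of_finrank_le (vectorSpan_mono ℝ hFG)
    exact hd
  have hxF : x ∈ F := intrinsicInterior_subset hx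
  have hyA : y ∈ affineSpan ℝ F := by
    have : y - x ∈ vectorSpan ℝ F := by
      rw [hv]; exact vsub_mem_vectorSpan ℝ hy (hFG hxF)
    have h2 := AffineSubspace.vadd_mem_of_mem_direction (s := affineSpan ℝ F)
      (by rw [direction_affineSpan]; exact this) (mem_affineSpan ℝ hxF)
    simpa using h2
  exact ext_of_relint hE hx hyA (hGP hy)

lemma exposed_face {P : Set E3} (hcl : IsClosed P) (hcv : Convex ℝ P) {a : E3} {b : ℝ}
    (hle : ∀ x ∈ P, inner ℝ a x ≤ b) (hne : (P ∩ {x | inner ℝ a x = b}).Nonempty) :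
    IsFaceOf (P ∩ {x | inner ℝ a x = b}) P := by
  refine ⟨hne, ?_, ?_, ?_, ?_⟩
  · apply hcl.inter
    exact isClosed_eq (by fun_prop) continuous_const
  · apply hcv.inter
    intro x hx y hy s t hs ht hst
    simp only [mem_ofPred_eq] at *
    rw [inner_add_right, inner_smul_right, inner_smul_right, hx, hy, ← add_mul, hst, one_mul]
  · exact inter_subset_left
  · rintro x hx y hy z ⟨hz, hzb⟩ ⟨s, t, hs, ht, hst, rfl⟩
    refine ⟨hx, ?_⟩
    simp only [mem_ofPred_eq] at *
    rw [inner_add_right, inner_smul_right, inner_smul_right] at hzb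
    have h1 := hle x hx
    have h2 := hle y hy
    by_contra hne
    have h3 : inner ℝ a x < b := lt_of_le_of_ne h1 hne
    have : s * inner ℝ a x + t * inner ℝ a y < s * b + t * b := by nlinarith
    rw [← add_mul, hst, one_mul] at this
    linarith

lemma dim_le_two {F : Set E3} {a : E3} (ha : a ≠ 0) {b : ℝ} (hb : ∀ x ∈ F, inner ℝ a x = b) :
    setDim F ≤ 2 := by
  unfold setDim
  have : Fact (Module.finrank ℝ E3 = 2 + 1) := ⟨by simp⟩
  have h := Submodule.finrank_orthogonal_span_singleton (𝕜 := ℝ) (n := 2) ha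
  refine le_trans (Submodule.finrank_mono ?_) h.le
  rw [vectorSpan_def, Submodule.span_le]
  rintro _ ⟨x, hx, y, hy, rfl⟩
  rw [SetLike.mem_coe, Submodule.mem_orthogonal_singleton_iff_inner_right]
  simp only [vsub_eq_sub, inner_sub_right, hb x hx, hb y hy, sub_self]

lemma exists_inner (f : E3 →L[ℝ] ℝ) : ∃ a : E3, ∀ x, f x = inner ℝ a x :=
  ⟨(InnerProductSpace.toDual ℝ E3).symm f, fun x => by simp⟩

/-- Supporting hyperplane of a facet. -/
lemma facet_support {P F : Set E3} (hcl : IsClosed P) (hcv : Convex ℝ P)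
    (hinC : (interior P).Nonempty) (hF : IsFacetOf F P) :
    ∃ (a : E3) (b : ℝ), a ≠ 0 ∧ (∀ x ∈ P, inner ℝ a x ≤ b) ∧ F = P ∩ {x | inner ℝ a x = b} := by
  obtain ⟨⟨hne, hFcl, hFcv, hE⟩, hdim⟩ := hF
  obtain ⟨x, hx⟩ := hne.intrinsicInterior hFcv
  have hxF : x ∈ F := intrinsicInterior_subset hx
  have hxi : x ∉ interior P := by
    intro hxi
    have hPF : P ⊆ F := by
      intro y hy
      obtain ⟨ε, hε, hb⟩ := Metric.isOpen_iff.1 isOpen_interior x hxi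
      set δ := ε / (2 * (‖y - x‖ + 1)) with hδ
      have hpos : 0 < ‖y - x‖ + 1 := by positivity
      have hδ0 : 0 < δ := by positivity
      have h1 : x + (-δ) • (y - x) ∈ P := by
        apply interior_subset
        apply hb
        rw [Metric.mem_ball, dist_eq_norm, add_sub_cancel_left, norm_smul, norm_neg, Real.norm_eq_abs, abs_of_pos hδ0]
        have : δ * (‖y - x‖ + 1) = ε / 2 := by rw [hδ]; field_simp
        nlinarith
      refine hE.2 hy h1 hxF ?_
      refine ⟨δ / (1 + δ), 1 / (1 + δ), by positivity, by positivity, by field_simp; ring, ?_⟩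
      match_scalars <;> field_simp <;> ring
    have : F = P := Subset.antisymm hE.1 hPF
    have htop := (hcv.interior_nonempty_iff_affineSpan_eq_top).1 hinC
    have : setDim F = 3 := by
      unfold setDim
      rw [this, ← direction_affineSpan, htop, AffineSubspace.direction_top]
      simp
    omega
  obtain ⟨f, hf0, hf⟩ := geometric_hahn_banach_of_nonempty_interior_point hcv hxi hinC
  obtain ⟨a, ha⟩ := exists_inner f
  have ha0 : a ≠ 0 := by
    rintro rfl
    apply hf0; ext y; rw [ha]; simp
  have hle : ∀ y ∈ P, inner ℝ a y ≤ inner ℝ a x := by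
    intro y hy; rw [← ha, ← ha]; exact hf y hy
  refine ⟨a, inner ℝ a x, ha0, hle, ?_⟩
  apply face_eq hE hFcv hne
  · intro y hy
    refine ⟨hE.1 hy, ?_⟩
    obtain ⟨ε, hε, h⟩ := relint_prop hx (mem_affineSpan ℝ hy)
    have h1 := hle _ (hE.1 (h (-ε) (by rw [abs_neg, abs_of_pos hε])))
    rw [inner_add_right, inner_smul_right, inner_sub_right] at h1
    have h2 := hle y (hE.1 hy)
    simp only [mem_ofPred_eq]
    nlinarith
  · exact inter_subset_left
  · rw [hdim]
    exact dim_le_two ha0 (fun y hy => hy.2)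

lemma polytope_compact {P : Set E3} (hP : IsPolytope P) : IsCompact P := by
  obtain ⟨V, rfl⟩ := hP
  exact (Finset.finite_toSet V).isCompact_convexHull ℝ

lemma polytope_convex {P : Set E3} (hP : IsPolytope P) : Convex ℝ P := by
  obtain ⟨V, rfl⟩ := hP
  exact convex_convexHull ℝ _

lemma dim3_interior {P : Set E3} (hc : Convex ℝ P) (hd : setDim P = 3) :
    (interior P).Nonempty := by
  rw [hc.interior_nonempty_iff_affineSpan_eq_top]
  have hne : P.Nonempty := by
    by_contra h
    rw [not_nonempty_iff_eq_empty] at h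
    rw [h] at hd
    unfold setDim at hd
    rw [vectorSpan_empty, finrank_bot] at hd
    omega
  have htop : vectorSpan ℝ P = ⊤ := by
    apply Submodule.eq_top_of_finrank_eq
    unfold setDim at hd
    rw [hd]; simp
  obtain ⟨x, hx⟩ := hne
  rw [← AffineSubspace.direction_eq_top_iff_of_nonempty ⟨x, mem_affineSpan ℝ hx⟩, direction_affineSpan, htop]

/-- Separation of a point by a facet. -/
lemma polar_sep {P : Set E3} (hP : IsPolytope P) {z : E3} (hz : z ∈ interior P) {y : E3}
    (hy : y ∉ P) : ∃ a : E3, (∀ x ∈ P, inner ℝ a (x - z) ≤ 1) ∧ 1 < inner ℝ a (y - z) ∧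
      IsFacetOf (P ∩ {x | inner ℝ a (x - z) = 1}) P ∧
      ∀ a' : E3, (∀ x ∈ P, inner ℝ a (x - z) = 1 → inner ℝ a' (x - z) = 1) → a' = a := by
  have hcp := polytope_compact hP
  have hcv := polytope_convex hP
  obtain ⟨V, hV⟩ := hP
  have hVP : ∀ v ∈ V, v ∈ P := by
    intro v hv; rw [hV]; exact subset_convexHull ℝ _ hv
  have hzP : z ∈ P := interior_subset hz
  set Q : Set E3 := {a | ∀ v ∈ V, inner ℝ a (v - z) ≤ 1} with hQ
  have hQP : ∀ a ∈ Q, ∀ x ∈ P, inner ℝ a (x - z) ≤ 1 := by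
    intro a ha x hx
    have hconv : Convex ℝ {x : E3 | inner ℝ a (x - z) ≤ 1} := by
      intro p hp q hq s t hs ht hst
      simp only [mem_ofPred_eq] at *
      have : s • p + t • q - z = s • (p - z) + t • (q - z) := by
        have : z = s • z + t • z := by rw [← add_smul, hst, one_smul]
        nth_rewrite 1 [this]
        module
      rw [this, inner_add_right, inner_smul_right, inner_smul_right]
      nlinarith
    rw [hV] at hx
    exact convexHull_min (fun v hv => ha v hv) hconv hx
  have hQcl : IsClosed Q := by
    have : Q = ⋂ v ∈ V, {a : E3 | inner ℝ a (v - z) ≤ 1} := by ext a; simp [hQ]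
    rw [this]
    apply isClosed_biInter
    intro v _
    exact isClosed_le (by fun_prop) continuous_const
  have hQcv : Convex ℝ Q := by
    intro p hp q hq s t hs ht hst v hv
    have h1 := hp v hv
    have h2 := hq v hv
    rw [inner_add_left, inner_smul_left, inner_smul_left]
    simp only [conj_trivial]
    nlinarith
  have hQb : Bornology.IsBounded Q := by
    obtain ⟨ε, hε, hb⟩ := Metric.isOpen_iff.1 isOpen_interior z hz
    rw [isBounded_iff_forall_norm_le]
    refine ⟨2 / ε, ?_⟩
    intro a ha
    by_cases ha0 : a = 0
    · subst ha0; rw [norm_zero]; positivity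
    have hna : 0 < ‖a‖ := norm_pos_iff.2 ha0
    have hm : z + (ε / (2 * ‖a‖)) • a ∈ P := by
      apply interior_subset; apply hb
      rw [Metric.mem_ball, dist_eq_norm, add_sub_cancel_left, norm_smul, Real.norm_eq_abs,
        abs_of_pos (by positivity)]
      have : ε / (2 * ‖a‖) * ‖a‖ = ε / 2 := by field_simp
      linarith
    have := hQP a ha _ hm
    rw [add_sub_cancel_left, inner_smul_right, real_inner_self_eq_norm_sq] at this
    have h2 : ε / (2 * ‖a‖) * ‖a‖ ^ 2 = ε * ‖a‖ / 2 := by field_simp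
    rw [h2] at this
    rw [le_div_iff₀ hε]; linarith
  have hQcp : IsCompact Q := Metric.isCompact_of_isClosed_isBounded hQcl hQb
  -- a separating functional
  obtain ⟨f, u, hfu, hfy⟩ := geometric_hahn_banach_closed_point hcv hcp.isClosed hy
  obtain ⟨a1, ha1⟩ := exists_inner f
  have hs : 0 < u - f z := by have := hfu z hzP; linarith
  set a0 : E3 := (u - f z)⁻¹ • a1 with ha0
  have hia0 : ∀ x, inner ℝ a0 (x - z) = (u - f z)⁻¹ * (f x - f z) := by
    intro x
    rw [ha0, inner_smul_left, inner_sub_right, ← ha1, ← ha1]; simp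
  have ha0Q : a0 ∈ Q := by
    intro v hv
    rw [hia0, inv_mul_le_iff₀ hs]
    have := hfu v (hVP v hv); linarith
  have ha0y : 1 < inner ℝ a0 (y - z) := by
    rw [hia0, lt_inv_mul_iff₀ hs]; linarith
  -- an extreme separating functional
  obtain ⟨a, haE, hay⟩ : ∃ a ∈ Q.extremePoints ℝ, 1 < inner ℝ a (y - z) := by
    by_contra hcon
    push Not at hcon
    have hsub : closure (convexHull ℝ (Q.extremePoints ℝ)) ⊆ {a : E3 | inner ℝ a (y - z) ≤ 1} := by
      apply closure_minimal
      · apply convexHull_min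
        · exact fun a ha => hcon a ha
        · intro p hp q hq s t hs ht hst
          simp only [mem_ofPred_eq] at *
          rw [inner_add_left, inner_smul_left, inner_smul_left]
          simp only [conj_trivial]
          nlinarith
      · exact isClosed_le (by fun_prop) continuous_const
    rw [closure_convexHull_extremePoints hQcp hQcv] at hsub
    have := hsub ha0Q
    simp only [mem_ofPred_eq] at this
    linarith
  have haQ : a ∈ Q := haE.1
  have hspan : Submodule.span ℝ {w : E3 | ∃ v ∈ V, w = v - z ∧ inner ℝ a (v - z) = 1} = ⊤ := by
    rw [← Submodule.orthogonal_eq_bot_iff, Submodule.eq_bot_iff]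
    intro d hd
    by_contra hd0
    have hdv : ∀ v ∈ V, inner ℝ a (v - z) = 1 → inner ℝ d (v - z) = 0 := by
      intro v hv h1
      rw [Submodule.mem_orthogonal'] at hd
      exact hd _ (Submodule.subset_span ⟨v, hv, rfl, h1⟩)
    -- uniform epsilon
    have hev : ∀ᶠ s : ℝ in nhds 0, ∀ v ∈ V, inner ℝ (a + s • d) (v - z) ≤ 1 := by
      rw [Filter.eventually_all_finset]
      intro v hv
      rcases eq_or_lt_of_le (haQ v hv) with h | h
      · apply Filter.Eventually.of_forall
        intro s
        rw [inner_add_left, inner_smul_left, hdv v hv h, h]; simp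
      · have hc : Continuous (fun s : ℝ => inner ℝ (a + s • d) (v - z)) := by fun_prop
        have : Filter.Tendsto (fun s : ℝ => inner ℝ (a + s • d) (v - z)) (nhds 0)
            (nhds (inner ℝ a (v - z))) := by
          have := hc.tendsto 0
          simpa using this
        filter_upwards [this.eventually_lt_const h] with s hs using hs.le
    obtain ⟨ε, hε, hb⟩ := Metric.eventually_nhds_iff.1 hev
    have hp := hb (y := ε / 2) (by rw [Real.dist_eq, sub_zero, abs_of_pos (by positivity)]; linarith)
    have hm := hb (y := -(ε / 2)) (by rw [Real.dist_eq, sub_zero, abs_neg, abs_of_pos (by positivity)]; linarith)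
    have := (mem_extremePoints.1 haE).2 (a + (ε / 2) • d) hp (a + (-(ε / 2)) • d) hm
      ⟨1 / 2, 1 / 2, by norm_num, by norm_num, by norm_num, by module⟩
    have h3 := this.1
    have h4 : (ε / 2) • d = 0 := by simpa using h3
    rcases smul_eq_zero.1 h4 with h | h
    · linarith
    · exact hd0 h
  -- a vertex on the plane
  have hane : a ≠ 0 := by rintro rfl; simp at hay; linarith
  obtain ⟨v1, hv1, hv1a⟩ : ∃ v ∈ V, inner ℝ a (v - z) = 1 := by
    by_contra hcon
    push Not at hcon
    have : {w : E3 | ∃ v ∈ V, w = v - z ∧ inner ℝ a (v - z) = 1} = ∅ := by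
      ext w; simp only [mem_ofPred_eq, mem_empty_iff_false, iff_false]
      rintro ⟨v, hv, _, h⟩; exact hcon v hv h
    rw [this, Submodule.span_empty] at hspan
    have : a ∈ (⊥ : Submodule ℝ E3) := by rw [hspan]; trivial
    exact hane (by simpa using this)
  set F : Set E3 := P ∩ {x | inner ℝ a (x - z) = 1} with hF
  have hFb : F = P ∩ {x | inner ℝ a x = 1 + inner ℝ a z} := by
    rw [hF]; congr 1; ext x; simp only [mem_ofPred_eq, inner_sub_right]
    constructor <;> intro h <;> linarith
  have hleb : ∀ x ∈ P, inner ℝ a x ≤ 1 + inner ℝ a z := by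
    intro x hx
    have := hQP a haQ x hx
    rw [inner_sub_right] at this; linarith
  have hface : IsFaceOf F P := by
    rw [hFb]
    apply exposed_face hcp.isClosed hcv hleb
    rw [← hFb]
    exact ⟨v1, hVP v1 hv1, hv1a⟩
  refine ⟨a, hQP a haQ, hay, ⟨hface, ?_⟩, ?_⟩
  · apply le_antisymm
    · exact dim_le_two hane (b := 1 + inner ℝ a z) (fun x hx => by
        have hx' : x ∈ F := hx
        rw [hFb] at hx'; exact hx'.2)
    · have hle : (⊤ : Submodule ℝ E3) ≤ Submodule.span ℝ {v1 - z} ⊔ vectorSpan ℝ F := by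
        rw [← hspan, Submodule.span_le]
        rintro _ ⟨v, hv, rfl, h⟩
        have : v - z = (v1 - z) + (v - v1) := by abel
        rw [this]
        apply Submodule.add_mem_sup (Submodule.mem_span_singleton_self _)
        exact vsub_mem_vectorSpan ℝ (⟨hVP v hv, h⟩ : v ∈ F) (⟨hVP v1 hv1, hv1a⟩ : v1 ∈ F)
      have h3 := Submodule.finrank_mono hle
      have h4 := Submodule.finrank_add_le_finrank_add_finrank (Submodule.span ℝ {v1 - z}) (vectorSpan ℝ F)
      have h5 : Module.finrank ℝ (Submodule.span ℝ {v1 - z}) = 1 := finrank_span_singleton (by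
        intro h0; rw [h0] at hv1a; simp at hv1a)
      rw [finrank_top] at h3
      simp only [finrank_euclideanSpace, Fintype.card_fin] at h3
      change 2 ≤ Module.finrank ℝ (vectorSpan ℝ F)
      omega
  · intro a' ha'
    have hall : ∀ w : E3, inner ℝ (a' - a) w = 0 := by
      intro w
      have hw : w ∈ Submodule.span ℝ {w : E3 | ∃ v ∈ V, w = v - z ∧ inner ℝ a (v - z) = 1} := by
        rw [hspan]; trivial
      induction hw using Submodule.span_induction with
      | mem x hx =>
        obtain ⟨v, hv, rfl, h⟩ := hx
        rw [inner_sub_left, h, ha' v (hVP v hv) h, sub_self]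
      | zero => simp
      | add x y _ _ hx hy => rw [inner_add_right, hx, hy, add_zero]
      | smul s x _ hx => rw [inner_smul_right, hx, mul_zero]
    have := hall (a' - a)
    rw [inner_self_eq_zero] at this
    exact sub_eq_zero.1 this

/-- Representation of a polytope by its facet inequalities. -/
lemma hrep {P : Set E3} (hP : IsPolytope P) (hd : setDim P = 3) :
    ∃ (n : Set E3 → E3) (b : Set E3 → ℝ), (∀ G, IsFacetOf G P → ∀ x ∈ P, inner ℝ (n G) x ≤ b G) ∧
      (∀ G, IsFacetOf G P → G = P ∩ {x | inner ℝ (n G) x = b G}) ∧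
      (∀ y, (∀ G, IsFacetOf G P → inner ℝ (n G) y ≤ b G) → y ∈ P) := by
  have hcp := polytope_compact hP
  have hcv := polytope_convex hP
  have hinC := dim3_interior hcv hd
  obtain ⟨z, hz⟩ := hinC
  have hzP : z ∈ P := interior_subset hz
  have hex : ∀ G, ∃ a : E3, IsFacetOf G P → (∀ x ∈ P, inner ℝ a (x - z) ≤ 1) ∧
      G = P ∩ {x | inner ℝ a (x - z) = 1} := by
    intro G
    by_cases hG : IsFacetOf G P
    · obtain ⟨a, b, ha0, hle, hGe⟩ := facet_support hcp.isClosed hcv ⟨z, hz⟩ hG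
      have hlt : inner ℝ a z < b := by
        obtain ⟨ε, hε, hb⟩ := Metric.isOpen_iff.1 isOpen_interior z hz
        have hna : 0 < ‖a‖ := norm_pos_iff.2 ha0
        have hm : z + (ε / (2 * ‖a‖)) • a ∈ P := by
          apply interior_subset; apply hb
          rw [Metric.mem_ball, dist_eq_norm, add_sub_cancel_left, norm_smul, Real.norm_eq_abs,
            abs_of_pos (by positivity)]
          have : ε / (2 * ‖a‖) * ‖a‖ = ε / 2 := by field_simp
          linarith
        have := hle _ hm
        rw [inner_add_right, inner_smul_right, real_inner_self_eq_norm_sq] at this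
        have : 0 < ε / (2 * ‖a‖) * ‖a‖ ^ 2 := by positivity
        linarith
      have hs : 0 < b - inner ℝ a z := by linarith
      have hi : ∀ x, inner ℝ ((b - inner ℝ a z)⁻¹ • a) (x - z) =
          (b - inner ℝ a z)⁻¹ * (inner ℝ a x - inner ℝ a z) := by
        intro x; rw [inner_smul_left, inner_sub_right]; simp
      refine ⟨(b - inner ℝ a z)⁻¹ • a, fun _ => ⟨?_, ?_⟩⟩
      · intro x hx
        rw [hi, inv_mul_le_iff₀ hs]
        have := hle x hx; linarith
      · rw [hGe]; congr 1; ext x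
        simp only [mem_ofPred_eq, hi]
        rw [inv_mul_eq_one₀ hs.ne']
        constructor <;> intro h <;> linarith
    · exact ⟨0, fun h => absurd h hG⟩
  choose n hn using hex
  have hiff : ∀ a x : E3, inner ℝ a (x - z) = inner ℝ a x - inner ℝ a z :=
    fun a x => inner_sub_right _ _ _
  refine ⟨n, fun G => 1 + inner ℝ (n G) z, ?_, ?_, ?_⟩
  · intro G hG x hx
    have := (hn G hG).1 x hx
    rw [hiff] at this; linarith
  · intro G hG
    refine (hn G hG).2.trans ?_
    congr 1; ext x; simp only [mem_ofPred_eq, hiff]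
    constructor <;> intro h <;> linarith
  · intro y hy
    by_contra hyP
    obtain ⟨a, h1, h2, h3, h4⟩ := polar_sep hP hz hyP
    have hG := hn _ h3
    have := h4 (n _) (by
      intro x hx hxa
      have : x ∈ P ∩ {x | inner ℝ a (x - z) = 1} := ⟨hx, hxa⟩
      rw [hG.2] at this
      exact this.2)
    have h5 := hy _ h3
    simp only at h5
    rw [this] at h5
    rw [hiff] at h2
    linarith

lemma face_compact {P F : Set E3} (hP : IsPolytope P) (hF : IsFaceOf F P) : IsCompact F :=
  (polytope_compact hP).of_isClosed_subset hF.2.1 hF.2.2.2.1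

lemma face_hull {F : Set E3} {V : Finset E3} (hF : IsFaceOf F (convexHull ℝ (V : Set E3))) :
    F = convexHull ℝ ((V : Set E3) ∩ F) := by
  have hc := face_compact ⟨V, rfl⟩ hF
  obtain ⟨hne, hcl, hcv, hE⟩ := hF
  apply Subset.antisymm
  · have hfin : ((V : Set E3) ∩ F).Finite := (Finset.finite_toSet V).inter_of_left _
    have h1 := closure_convexHull_extremePoints hc hcv
    rw [← h1]
    rw [h1]
    have : closure (convexHull ℝ (F.extremePoints ℝ)) ⊆ convexHull ℝ ((V : Set E3) ∩ F) := by
      apply closure_minimal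
      · apply convexHull_mono
        intro x hx
        refine ⟨?_, hx.1⟩
        rw [hE.extremePoints_eq] at hx
        exact extremePoints_convexHull_subset hx.2
      · exact hfin.isClosed_convexHull ℝ
    rwa [h1] at this
  · exact convexHull_min inter_subset_right hcv

lemma finite_faces {P : Set E3} (hP : IsPolytope P) : {F | IsFaceOf F P}.Finite := by
  obtain ⟨V, rfl⟩ := hP
  have : {F | IsFaceOf F (convexHull ℝ (V : Set E3))} ⊆
      (fun S => convexHull ℝ S) '' {S : Set E3 | S ⊆ V} := by
    intro F hF
    exact ⟨(V : Set E3) ∩ F, inter_subset_left, (face_hull hF).symm⟩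
  exact ((Finset.finite_toSet V).finite_subsets.image _).subset this

lemma finite_facets {P : Set E3} (hP : IsPolytope P) : {F | IsFacetOf F P}.Finite :=
  (finite_faces hP).subset (fun _ h => h.1)

lemma vertex_iff {P : Set E3} {v : E3} : IsVertexOf v P ↔ v ∈ P.extremePoints ℝ := by
  unfold IsVertexOf IsFaceOf
  rw [← isExtreme_singleton]
  exact ⟨fun h => h.2.2.2, fun h => ⟨singleton_nonempty v, isClosed_singleton, convex_singleton v, h⟩⟩

lemma finite_vertices {P : Set E3} (hP : IsPolytope P) : {v | IsVertexOf v P}.Finite := by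
  obtain ⟨V, rfl⟩ := hP
  refine (Finset.finite_toSet V).subset ?_
  intro v hv
  exact extremePoints_convexHull_subset (vertex_iff.1 hv)

lemma vertex_of_face {P F : Set E3} (hF : IsFaceOf F P) {v : E3} :
    v ∈ F.extremePoints ℝ ↔ v ∈ F ∧ IsVertexOf v P := by
  rw [vertex_iff, hF.2.2.2.extremePoints_eq]; rfl

lemma face_has_vertex {P F : Set E3} (hP : IsPolytope P) (hF : IsFaceOf F P) :
    ∃ v ∈ F, IsVertexOf v P := by
  obtain ⟨v, hv⟩ := (face_compact hP hF).extremePoints_nonempty hF.1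
  exact ⟨v, (vertex_of_face hF).1 hv⟩

lemma vertex_mem {P : Set E3} {v : E3} (h : IsVertexOf v P) : v ∈ P := (vertex_iff.1 h).1

lemma face_inter {P F G : Set E3} (hF : IsFaceOf F P) (hG : IsFaceOf G P) (hne : (F ∩ G).Nonempty) :
    IsFaceOf (F ∩ G) P :=
  ⟨hne, hF.2.1.inter hG.2.1, hF.2.2.1.inter hG.2.2.1, hF.2.2.2.inter hG.2.2.2⟩

/-- Local cone coordinates at a vertex. -/
structure LocC (P : Set E3) (v : E3) where
  F : Fin 3 → Set E3
  u : Fin 3 → E3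
  m : Fin 3 → E3
  inj : Function.Injective F
  fac : ∀ i, IsFacetOf (F i) P
  vF : ∀ i, v ∈ F i
  all : ∀ G, IsFacetOf G P → v ∈ G → ∃ i, G = F i
  dual : ∀ i j, inner ℝ (m i) (u j) = if i = j then (1 : ℝ) else 0
  uP : ∀ j, v + u j ∈ P
  coord : ∀ x, x = v + ∑ j, (inner ℝ (m j) (x - v) : ℝ) • u j
  nonneg : ∀ x ∈ P, ∀ j, (0 : ℝ) ≤ inner ℝ (m j) (x - v)
  memF : ∀ x ∈ P, ∀ j, x ∈ F j ↔ inner ℝ (m j) (x - v) = (0 : ℝ)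

lemma exists_LocC {P : Set E3} (hP : IsSimplePolytope3 P) {v : E3} (hv : IsVertexOf v P) :
    Nonempty (LocC P v) := by
  obtain ⟨hpol, hd, h3⟩ := hP
  have hvP := vertex_mem hv
  have hfin := finite_facets hpol
  obtain ⟨n, b, hle, heq, hrep⟩ := hrep hpol hd
  obtain ⟨A, B, C, hAB, hAC, hBC, hset⟩ := Set.ncard_eq_three.1 (h3 v hv)
  let F : Fin 3 → Set E3 := ![A, B, C]
  have hiff : ∀ G, (IsFacetOf G P ∧ v ∈ G) ↔ ∃ i, G = F i := by
    intro G
    have : G ∈ {F | IsFacetOf F P ∧ v ∈ F} ↔ G ∈ ({A, B, C} : Set (Set E3)) := by rw [hset]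
    simp only [mem_ofPred_eq, mem_insert_iff, mem_singleton_iff] at this
    rw [this, Fin.exists_fin_succ, Fin.exists_fin_two]
    rfl
  have hinj : Function.Injective F := by
    intro i j hij
    fin_cases i <;> fin_cases j <;> simp [F] at hij <;> first | rfl | (exfalso; tauto)
  have hFf : ∀ i, IsFacetOf (F i) P := fun i => ((hiff _).2 ⟨i, rfl⟩).1
  have hFv : ∀ i, v ∈ F i := fun i => ((hiff _).2 ⟨i, rfl⟩).2
  have hnv : ∀ i, inner ℝ (n (F i)) v = b (F i) := by
    intro i
    have := hFv i
    rw [heq _ (hFf i)] at this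
    exact this.2
  have cone : ∀ d : E3, (∀ i, inner ℝ (n (F i)) d ≤ 0) →
      ∀ᶠ s : ℝ in nhds 0, 0 ≤ s → v + s • d ∈ P := by
    intro d hd
    have hev : ∀ᶠ s : ℝ in nhds 0, ∀ G ∈ {F | IsFacetOf F P}, 0 ≤ s →
        inner ℝ (n G) (v + s • d) ≤ b G := by
      rw [Filter.eventually_all_finite hfin]
      intro G hG
      by_cases hvG : v ∈ G
      · obtain ⟨i, rfl⟩ := (hiff G).1 ⟨hG, hvG⟩
        apply Filter.Eventually.of_forall
        intro s hs
        rw [inner_add_right, inner_smul_right, hnv]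
        nlinarith [hd i]
      · have hlt : inner ℝ (n G) v < b G := by
          refine lt_of_le_of_ne (hle G hG v hvP) ?_
          intro h
          apply hvG
          rw [heq G hG]; exact ⟨hvP, h⟩
        have hc : Continuous (fun s : ℝ => inner ℝ (n G) (v + s • d)) := by fun_prop
        have : Filter.Tendsto (fun s : ℝ => inner ℝ (n G) (v + s • d)) (nhds 0)
            (nhds (inner ℝ (n G) v)) := by
          have := hc.tendsto 0
          simpa using this
        filter_upwards [this.eventually_lt_const hlt] with s hs _ using hs.le
    filter_upwards [hev] with s hs h0
    exact hrep _ (fun G hG => hs G hG h0)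
  let T : E3 →ₗ[ℝ] (Fin 3 → ℝ) :=
    { toFun := fun x i => inner ℝ (n (F i)) x
      map_add' := by intro x y; ext i; simp [inner_add_right]
      map_smul' := by intro s x; ext i; simp [inner_smul_right] }
  have hT : ∀ x i, T x i = inner ℝ (n (F i)) x := fun x i => rfl
  have hTinj : Function.Injective T := by
    rw [← LinearMap.ker_eq_bot, LinearMap.ker_eq_bot']
    intro d hd
    have hd' : ∀ i, inner ℝ (n (F i)) d = 0 := fun i => by rw [← hT, hd]; rfl
    have h1 := cone d (fun i => (hd' i).le)
    have h2 := cone (-d) (fun i => by rw [inner_neg_right, hd']; simp)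
    obtain ⟨ε, hε, hb⟩ := Metric.eventually_nhds_iff.1 (h1.and h2)
    have hp := hb (y := ε / 2) (by rw [Real.dist_eq, sub_zero, abs_of_pos (by positivity)]; linarith)
    have := (mem_extremePoints.1 (vertex_iff.1 hv)).2 _ (hp.1 (by positivity)) _ (hp.2 (by positivity))
      ⟨1 / 2, 1 / 2, by norm_num, by norm_num, by norm_num, by module⟩
    have h4 : (ε / 2) • d = 0 := by simpa using this.1
    rcases smul_eq_zero.1 h4 with h | h
    · linarith
    · exact h
  let e : E3 ≃ₗ[ℝ] (Fin 3 → ℝ) := LinearEquiv.ofInjectiveOfFinrankEq T hTinj (by simp)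
  have he : ∀ x, e x = T x := fun x => rfl
  let w : Fin 3 → E3 := fun j => e.symm (fun i => if i = j then -1 else 0)
  have hw : ∀ i j, inner ℝ (n (F i)) (w j) = if i = j then (-1 : ℝ) else 0 := by
    intro i j
    rw [← hT, ← he]
    simp only [w, LinearEquiv.apply_symm_apply]
  have hev : ∀ᶠ s : ℝ in nhds 0, ∀ j, 0 ≤ s → v + s • w j ∈ P := by
    rw [Filter.eventually_all]
    intro j
    apply cone
    intro i; rw [hw]; split_ifs <;> norm_num
  obtain ⟨ε, hε, hb⟩ := Metric.eventually_nhds_iff.1 hev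
  have hp := hb (y := ε / 2) (by rw [Real.dist_eq, sub_zero, abs_of_pos (by positivity)]; linarith)
  have hε2 : 0 < ε / 2 := by positivity
  generalize ε / 2 = δ at hp hε2
  have hm : ∀ i x, inner ℝ (-(δ⁻¹ • n (F i))) x = - (δ⁻¹ * inner ℝ (n (F i)) x) := by
    intro i x; rw [inner_neg_left, inner_smul_left]; simp
  have hdual : ∀ i j, inner ℝ (-(δ⁻¹ • n (F i))) (δ • w j) = if i = j then (1 : ℝ) else 0 := by
    intro i j
    rw [hm, inner_smul_right, hw]; split_ifs
    · field_simp
    · simp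
  refine ⟨⟨F, fun j => δ • w j, fun i => -(δ⁻¹ • n (F i)), hinj, hFf, hFv,
    fun G h1 h2 => (hiff G).1 ⟨h1, h2⟩, hdual, fun j => hp j hε2.le, ?_, ?_, ?_⟩⟩
  · intro x
    rw [← sub_eq_iff_eq_add']
    apply hTinj
    ext i
    rw [hT, hT, inner_sum]
    simp only [inner_smul_right, hm, hw]
    simp
    field_simp
  · intro x hx j
    rw [hm, inner_sub_right, hnv]
    have := hle _ (hFf j) x hx
    have h0 : 0 ≤ δ⁻¹ := by positivity
    nlinarith
  · intro x hx j
    have hxe : x ∈ F j ↔ inner ℝ (n (F j)) x = b (F j) := by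
      constructor
      · intro h
        rw [heq _ (hFf j)] at h
        exact h.2
      · intro h
        rw [heq _ (hFf j)]
        exact ⟨hx, h⟩
    rw [hxe, hm, inner_sub_right, hnv, neg_eq_zero, mul_eq_zero, or_iff_right (by positivity),
      sub_eq_zero]

lemma third (i j : Fin 3) (h : i ≠ j) : ∃ k, k ≠ i ∧ k ≠ j ∧ ∀ l, l = i ∨ l = j ∨ l = k := by
  revert i j; decide

lemma others (k : Fin 3) : ∃ i j, i ≠ j ∧ k ≠ i ∧ k ≠ j ∧ ∀ l, l = i ∨ l = j ∨ l = k := by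
  revert k; decide

lemma LocC.sum_mem {P : Set E3} (hc : Convex ℝ P) {v : E3} (hv : v ∈ P) (c : LocC P v)
    (s : Fin 3 → ℝ) (h0 : ∀ j, 0 ≤ s j) (h1 : ∑ j, s j ≤ 1) : v + ∑ j, s j • c.u j ∈ P := by
  have h2 : (1 - ∑ j, s j) • v + ∑ j, s j • (v + c.u j) ∈ P := by
    have := hc.sum_mem (t := Finset.univ) (w := fun o : Option (Fin 3) => o.elim (1 - ∑ j, s j) s)
      (z := fun o => o.elim v (fun j => v + c.u j)) ?_ ?_ ?_
    · simpa [Fintype.sum_option] using this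
    · rintro (_ | j) _
      · simp only [Option.elim]; linarith
      · exact h0 j
    · simp [Fintype.sum_option]
    · rintro (_ | j) _
      · exact hv
      · exact c.uP j
  convert h2 using 1
  simp only [smul_add, Finset.sum_add_distrib, ← Finset.sum_smul]
  module

lemma LocC.u_ne {P : Set E3} {v : E3} (c : LocC P v) (k : Fin 3) : c.u k ≠ 0 := by
  intro h
  have := c.dual k k
  rw [h] at this; simp at this

lemma LocC.line {P : Set E3} {v : E3} (c : LocC P v) {k : Fin 3} {x : E3} (hx : x ∈ P)
    (h : ∀ j, j ≠ k → x ∈ c.F j) : x = v + (inner ℝ (c.m k) (x - v) : ℝ) • c.u k := by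
  have h1 := c.coord x
  rw [Finset.sum_eq_single k] at h1
  · exact h1
  · intro j _ hj
    rw [(c.memF x hx j).1 (h j hj), zero_smul]
  · simp

lemma LocC.uF {P : Set E3} {v : E3} (c : LocC P v) {k j : Fin 3} (h : j ≠ k) :
    v + c.u k ∈ c.F j := by
  rw [c.memF _ (c.uP k), add_sub_cancel_left, c.dual, if_neg h]

lemma LocC.edge {P : Set E3} {v : E3} (c : LocC P v) {i j : Fin 3} (h : i ≠ j) :
    IsEdgeOf (c.F i ∩ c.F j) P := by
  obtain ⟨k, hki, hkj, hall⟩ := third i j h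
  have hface := face_inter (c.fac i).1 (c.fac j).1 ⟨v, c.vF i, c.vF j⟩
  refine ⟨hface, ?_⟩
  have hv0 : v ∈ c.F i ∩ c.F j := ⟨c.vF i, c.vF j⟩
  have hv1 : v + c.u k ∈ c.F i ∩ c.F j := ⟨c.uF hki.symm, c.uF hkj.symm⟩
  have hspan : vectorSpan ℝ (c.F i ∩ c.F j) = Submodule.span ℝ {c.u k} := by
    apply le_antisymm
    · rw [vectorSpan_eq_span_vsub_set_right ℝ hv0, Submodule.span_le]
      rintro _ ⟨x, hx, rfl⟩
      have hxP : x ∈ P := hface.2.2.2.1 hx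
      have := c.line (k := k) hxP (by
        intro l hl
        rcases hall l with rfl | rfl | rfl
        · exact hx.1
        · exact hx.2
        · exact absurd rfl hl)
      rw [SetLike.mem_coe, Submodule.mem_span_singleton]
      refine ⟨inner ℝ (c.m k) (x - v), ?_⟩
      change _ = x - v
      nth_rewrite 2 [this]
      rw [add_sub_cancel_left]
    · rw [Submodule.span_singleton_le_iff_mem]
      have := vsub_mem_vectorSpan ℝ hv1 hv0
      simpa using this
  unfold setDim
  rw [hspan, finrank_span_singleton (c.u_ne k)]

/-- Structure of a compact convex set of dimension one. -/
lemma edge_segment {P e : Set E3} (hP : IsPolytope P) (he : IsEdgeOf e P) :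
    ∃ a b, a ≠ b ∧ IsVertexOf a P ∧ IsVertexOf b P ∧ e = segment ℝ a b ∧
      ∀ w, w ∈ e → IsVertexOf w P → w = a ∨ w = b := by
  obtain ⟨hf, hd⟩ := he
  have hcp := face_compact hP hf
  have hcv := hf.2.2.1
  obtain ⟨a, ha⟩ := hcp.extremePoints_nonempty hf.1
  obtain ⟨b, hb, hba⟩ : ∃ b ∈ e.extremePoints ℝ, b ≠ a := by
    by_contra hcon
    push Not at hcon
    have h1 : e.extremePoints ℝ = {a} := by
      ext x; exact ⟨fun h => hcon x h, fun h => by rw [mem_singleton_iff.1 h]; exact ha⟩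
    have h2 := closure_convexHull_extremePoints hcp hcv
    rw [h1, convexHull_singleton, closure_singleton] at h2
    unfold setDim at hd
    rw [← h2, vectorSpan_singleton, finrank_bot] at hd
    omega
  have hline : ∀ w ∈ e, ∃ s : ℝ, w = a + s • (b - a) := by
    intro w hw
    unfold setDim at hd
    have hne : (⟨b - a, vsub_mem_vectorSpan ℝ hb.1 ha.1⟩ : vectorSpan ℝ e) ≠ 0 := by
      intro h
      exact hba (sub_eq_zero.1 (congrArg Subtype.val h))
    obtain ⟨s, hs⟩ := exists_smul_eq_of_finrank_eq_one hd hne ⟨w - a, vsub_mem_vectorSpan ℝ hw ha.1⟩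
    refine ⟨s, ?_⟩
    have := congrArg Subtype.val hs
    simp only [Submodule.coe_smul] at this
    rw [this]; abel
  have hline2 : ∀ w ∈ e, ∃ s : ℝ, 0 ≤ s ∧ s ≤ 1 ∧ w = a + s • (b - a) := by
    intro w hw
    obtain ⟨s, hs⟩ := hline w hw
    refine ⟨s, ?_, ?_, hs⟩
    · by_contra hneg
      push Not at hneg
      have h1 : 0 < 1 - s := by linarith
      have := (mem_extremePoints.1 ha).2 w hw b hb.1
        ⟨1 / (1 - s), (-s) / (1 - s), by positivity, by apply div_pos <;> linarith, by rw [← add_div]; apply div_eq_one_iff_eq (by linarith) |>.2; ring, by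
          rw [hs]; match_scalars <;> field_simp <;> ring⟩
      exact hba this.2
    · by_contra hneg
      push Not at hneg
      have := (mem_extremePoints.1 hb).2 w hw a ha.1
        ⟨1 / s, (s - 1) / s, by positivity, by apply div_pos <;> linarith, by field_simp; ring, by
          rw [hs]; match_scalars <;> field_simp <;> ring⟩
      exact hba this.2.symm
  refine ⟨a, b, hba.symm, ((vertex_of_face hf).1 ha).2, ((vertex_of_face hf).1 hb).2, ?_, ?_⟩
  · apply Subset.antisymm
    · intro w hw
      obtain ⟨s, h0, h1, rfl⟩ := hline2 w hw
      exact ⟨1 - s, s, by linarith, h0, by ring, by module⟩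
    · exact hcv.segment_subset ha.1 hb.1
  · intro w hw hwv
    obtain ⟨s, h0, h1, rfl⟩ := hline2 w hw
    rcases eq_or_lt_of_le h0 with h | h
    · left; rw [← h]; simp
    rcases eq_or_lt_of_le h1 with h' | h'
    · right; rw [h']; simp
    have := (mem_extremePoints.1 ((vertex_of_face hf).2 ⟨hw, hwv⟩)).2 a ha.1 b hb.1
      ⟨1 - s, s, by linarith, h, by ring, by module⟩
    left; exact this.1.symm

lemma facet_inter_edge {P F G : Set E3} (hP : IsSimplePolytope3 P) (hF : IsFacetOf F P)
    (hG : IsFacetOf G P) (hne : F ≠ G) (h : (F ∩ G).Nonempty) : IsEdgeOf (F ∩ G) P := by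
  obtain ⟨v, hv, hvv⟩ := face_has_vertex hP.1 (face_inter hF.1 hG.1 h)
  obtain ⟨c⟩ := exists_LocC hP hvv
  obtain ⟨i, rfl⟩ := c.all F hF hv.1
  obtain ⟨j, rfl⟩ := c.all G hG hv.2
  exact c.edge (fun h => hne (by rw [h]))

lemma edge_facets {P e : Set E3} (hP : IsSimplePolytope3 P) (he : IsEdgeOf e P) :
    ∃ F G, IsFacetOf F P ∧ IsFacetOf G P ∧ F ≠ G ∧ e = F ∩ G ∧
      ∀ H, IsFacetOf H P → e ⊆ H → H = F ∨ H = G := by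
  obtain ⟨v, w, hvw, hv, hw, hseg, -⟩ := edge_segment hP.1 he
  obtain ⟨c⟩ := exists_LocC hP hv
  have hcv := polytope_convex hP.1
  have hvP := vertex_mem hv
  have hwP := vertex_mem hw
  have hve : v ∈ e := by rw [hseg]; exact left_mem_segment ℝ v w
  have hwe : w ∈ e := by rw [hseg]; exact right_mem_segment ℝ v w
  have hE := he.1.2.2.2
  set t : Fin 3 → ℝ := fun j => inner ℝ (c.m j) (w - v) with ht
  have ht0 : ∀ j, 0 ≤ t j := fun j => c.nonneg w hwP j
  have hwc : w = v + ∑ j, t j • c.u j := c.coord w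
  have huniq : ∀ a b, a ≠ b → t a ≠ 0 → t b ≠ 0 → False := by
    intro a b hab ha hb
    have ha' : 0 < t a := lt_of_le_of_ne (ht0 a) ha.symm
    have hS : 0 < ∑ j, t j := Finset.sum_pos' (fun j _ => ht0 j) ⟨a, Finset.mem_univ _, ha'⟩
    set S := ∑ j, t j with hSdef
    set δ := 1 / (2 * S + 2) with hδ
    have hδ0 : 0 < δ := by positivity
    have hδS : 2 * δ * S ≤ 1 := by
      rw [hδ]; field_simp; linarith
    have hδ1 : δ ≤ 1 := by
      rw [hδ, div_le_one (by positivity)]; linarith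
    have hx : v + δ • (w - v) ∈ e := by
      rw [hseg]
      exact ⟨1 - δ, δ, by linarith, hδ0.le, by ring, by module⟩
    have hp : v + ∑ j, (if j = a then 2 * δ * t j else 0) • c.u j ∈ P := by
      apply c.sum_mem hcv hvP
      · intro j; split_ifs
        · have := ht0 j; positivity
        · exact le_rfl
      · refine le_trans ?_ hδS
        rw [hSdef, Finset.mul_sum]
        apply Finset.sum_le_sum
        intro j _
        have := ht0 j
        split_ifs
        · exact le_rfl
        · positivity
    have hq : v + ∑ j, (if j = a then 0 else 2 * δ * t j) • c.u j ∈ P := by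
      apply c.sum_mem hcv hvP
      · intro j; split_ifs
        · exact le_rfl
        · have := ht0 j; positivity
      · refine le_trans ?_ hδS
        rw [hSdef, Finset.mul_sum]
        apply Finset.sum_le_sum
        intro j _
        have := ht0 j
        split_ifs
        · positivity
        · exact le_rfl
    have hpe := hE.2 hp hq hx ⟨1 / 2, 1 / 2, by norm_num, by norm_num, by norm_num, by
      have hwv : w - v = ∑ j, t j • c.u j := by rw [sub_eq_iff_eq_add']; exact hwc
      rw [hwv, smul_add, smul_add, Finset.smul_sum, Finset.smul_sum, Finset.smul_sum]
      rw [show ∀ A B : E3, (1 / 2 : ℝ) • v + A + ((1 / 2 : ℝ) • v + B) = v + (A + B) by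
        intro A B; module]
      rw [← Finset.sum_add_distrib]
      congr 1
      apply Finset.sum_congr rfl
      intro j _
      split_ifs <;> module⟩
    rw [hseg] at hpe
    obtain ⟨r, s, hr, hs, hrs, hE2⟩ := hpe
    have hcoor : ∀ l, inner ℝ (c.m l) (∑ j, (if j = a then 2 * δ * t j else 0) • c.u j) =
        if l = a then 2 * δ * t l else 0 := by
      intro l
      rw [inner_sum]
      simp only [inner_smul_right, c.dual]
      simp
    have hd : s • (w - v) = ∑ j, (if j = a then 2 * δ * t j else 0) • c.u j := by
      have hr' : r = 1 - s := by linarith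
      rw [hr'] at hE2
      rw [← sub_eq_zero] at hE2 ⊢
      rw [← hE2]; module
    have h1 := hcoor b
    rw [← hd, inner_smul_right, if_neg hab.symm] at h1
    have h2 := hcoor a
    rw [← hd, inner_smul_right, if_pos rfl] at h2
    have hs0 : s = 0 := by
      rcases mul_eq_zero.1 h1 with h | h
      · exact h
      · exact absurd h hb
    rw [hs0, zero_mul] at h2
    have : 0 < 2 * δ * t a := by positivity
    linarith
  obtain ⟨k, hk⟩ : ∃ k, t k ≠ 0 := by
    by_contra hcon
    push Not at hcon
    apply hvw
    rw [hwc]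
    simp [hcon]
  have hother : ∀ j, j ≠ k → t j = 0 := fun j hj => by
    by_contra h
    exact huniq j k hj h hk
  obtain ⟨i, j, hij, hki, hkj, hall⟩ := others k
  have hsub : ∀ l, l ≠ k → e ⊆ c.F l := by
    intro l hl
    rw [hseg]
    exact (c.fac l).1.2.2.1.segment_subset (c.vF l) ((c.memF w hwP l).2 (hother l hl))
  have hed := c.edge hij
  refine ⟨c.F i, c.F j, c.fac i, c.fac j, fun h => hij (c.inj h), ?_, ?_⟩
  · apply face_eq hE he.1.2.2.1 he.1.1
    · exact subset_inter (hsub i hki.symm) (hsub j hkj.symm)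
    · exact hed.1.2.2.2.1
    · rw [hed.2, he.2]
  · intro H hH heH
    obtain ⟨l, rfl⟩ := c.all H hH (heH hve)
    rcases hall l with rfl | rfl | rfl
    · exact Or.inl rfl
    · exact Or.inr rfl
    · exact absurd ((c.memF w hwP l).1 (heH hwe)) hk

lemma inter_facets {P F G H : Set E3} (hP : IsSimplePolytope3 P) (hF : IsFacetOf F P)
    (hG : IsFacetOf G P) (hne : F ≠ G) (h : (F ∩ G).Nonempty) (hH : IsFacetOf H P)
    (hsub : F ∩ G ⊆ H) : H = F ∨ H = G := by
  obtain ⟨A, B, hA, hB, hAB, he, hall⟩ := edge_facets hP (facet_inter_edge hP hF hG hne h)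
  have h1 := hall F hF inter_subset_left
  have h2 := hall G hG inter_subset_right
  have h3 := hall H hH hsub
  grind

lemma facetEdges_eq {P F : Set E3} (hP : IsSimplePolytope3 P) (hF : IsFacetOf F P) :
    facetEdges P F = {G | IsFacetOf G P ∧ G ≠ F ∧ ∃ v, IsVertexOf v P ∧ v ∈ F ∧ v ∈ G}.ncard := by
  unfold facetEdges
  have hset : {e | IsEdgeOf e P ∧ e ⊆ F} = (fun G => F ∩ G) ''
      {G | IsFacetOf G P ∧ G ≠ F ∧ ∃ v, IsVertexOf v P ∧ v ∈ F ∧ v ∈ G} := by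
    ext e
    constructor
    · rintro ⟨he, heF⟩
      obtain ⟨A, B, hA, hB, hAB, hee, hall⟩ := edge_facets hP he
      obtain ⟨v, hv, hvv⟩ := face_has_vertex hP.1 he.1
      have hvAB : v ∈ A ∩ B := hee ▸ hv
      rcases hall F hF heF with rfl | rfl
      · exact ⟨B, ⟨hB, hAB.symm, v, hvv, hvAB.1, hvAB.2⟩, hee.symm⟩
      · exact ⟨A, ⟨hA, hAB, v, hvv, hvAB.2, hvAB.1⟩, by rw [hee, inter_comm]⟩
    · rintro ⟨G, ⟨hG, hne, v, hvv, hvF, hvG⟩, rfl⟩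
      exact ⟨facet_inter_edge hP hF hG hne.symm ⟨v, hvF, hvG⟩, inter_subset_left⟩
  rw [hset]
  apply Set.ncard_image_of_injOn
  rintro G ⟨hG, hne, v, hvv, hvF, hvG⟩ G' ⟨hG', hne', -⟩ heq
  simp only at heq
  rcases inter_facets hP hF hG hne.symm ⟨v, hvF, hvG⟩ hG' (by rw [heq]; exact inter_subset_right) with h | h
  · exact absurd h hne'
  · exact h.symm

lemma LocC.nbr {P : Set E3} (hP : IsSimplePolytope3 P) {v : E3} (hv : IsVertexOf v P)
    (c : LocC P v) (k : Fin 3) : ∃ w s, IsVertexOf w P ∧ w ≠ v ∧ 0 < s ∧ w = v + (s : ℝ) • c.u k ∧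
      ∀ j, j ≠ k → w ∈ c.F j := by
  obtain ⟨i, j, hij, hki, hkj, hall⟩ := others k
  obtain ⟨a, b, hab, ha, hb, hseg, huniq⟩ := edge_segment hP.1 (c.edge hij)
  obtain ⟨w, hw, hwv, hwe⟩ : ∃ w, IsVertexOf w P ∧ w ≠ v ∧ w ∈ c.F i ∩ c.F j := by
    by_cases h : a = v
    · exact ⟨b, hb, fun h' => hab (h.trans h'.symm), by rw [hseg]; exact right_mem_segment ℝ a b⟩
    · exact ⟨a, ha, h, by rw [hseg]; exact left_mem_segment ℝ a b⟩
  have hwF : ∀ l, l ≠ k → w ∈ c.F l := by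
    intro l hl
    rcases hall l with rfl | rfl | rfl
    · exact hwe.1
    · exact hwe.2
    · exact absurd rfl hl
  have hline := c.line (vertex_mem hw) hwF
  refine ⟨w, _, hw, hwv, ?_, hline, hwF⟩
  refine lt_of_le_of_ne (c.nonneg w (vertex_mem hw) k) ?_
  intro h
  rw [← h] at hline
  apply hwv
  rw [hline]; simp

abbrev Vt (P : Set E3) := {v : E3 // IsVertexOf v P}
abbrev Ft (P : Set E3) := {F : Set E3 // IsFacetOf F P}

lemma exists_height {P : Set E3} (hP : IsPolytope P) :
    ∃ f : E3 →ₗ[ℝ] ℝ, ∀ v w, IsVertexOf v P → IsVertexOf w P → f v = f w → v = w := by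
  have hfin := (finite_vertices hP)
  have : Finite {v | IsVertexOf v P} := hfin
  obtain ⟨f, hf⟩ := Module.exists_dual_forall_apply_ne_zero (K := ℝ)
    (fun p : {p : {v | IsVertexOf v P} × {v | IsVertexOf v P} // p.1 ≠ p.2} => (p.1.1.1 : E3) - p.1.2.1)
    (by
      rintro ⟨⟨p, q⟩, h⟩ h0
      exact h (Subtype.ext (sub_eq_zero.1 h0)))
  refine ⟨f, ?_⟩
  intro v w hv hw hvw
  by_contra hne
  apply hf ⟨(⟨v, hv⟩, ⟨w, hw⟩), fun h => hne (congrArg Subtype.val h)⟩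
  simp only [map_sub]
  exact sub_eq_zero.2 hvw

lemma LocC.apply {P : Set E3} {v : E3} (c : LocC P v) (f : E3 →ₗ[ℝ] ℝ) (x : E3) :
    f x = f v + ∑ j, (inner ℝ (c.m j) (x - v) : ℝ) * f (c.u j) := by
  conv_lhs => rw [c.coord x]
  simp

open Classical in
/-- The combinatorial data of a fullerene. -/
lemma exists_Cx {P : Set E3} (hP : IsFullerene P) :
    ∃ (_ : Fintype (Vt P)) (_ : Fintype (Ft P)) (c : Cx (Vt P) (Ft P)),
      ∀ v F, F ∈ c.I v ↔ v.1 ∈ F.1 := by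
  have hS := hP.1
  have hpol := hS.1
  let iV : Fintype (Vt P) := (finite_vertices hpol).fintype
  let iF : Fintype (Ft P) := (finite_facets hpol).fintype
  obtain ⟨f, hf⟩ := exists_height hpol
  let I : Vt P → Finset (Ft P) := fun v => Finset.univ.filter (fun F => v.1 ∈ F.1)
  have hI : ∀ v F, F ∈ I v ↔ v.1 ∈ F.1 := by intro v F; simp [I]
  refine ⟨iV, iF, ⟨I, fun v => f v.1, ?_, ?_, ?_, ?_, ?_, ?_⟩, hI⟩
  · intro v
    rw [← hS.2.2 v.1 v.2]
    have : (({F | IsFacetOf F P ∧ v.1 ∈ F} : Set (Set E3))) = Subtype.val '' ((I v : Finset (Ft P)) : Set (Ft P)) := by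
      ext F
      simp only [mem_ofPred_eq, mem_image, Finset.mem_coe, hI]
      constructor
      · rintro ⟨h1, h2⟩; exact ⟨⟨F, h1⟩, h2, rfl⟩
      · rintro ⟨G, h1, rfl⟩; exact ⟨G.2, h1⟩
    rw [this, Set.ncard_image_of_injective _ Subtype.val_injective, Set.ncard_coe_finset]
  · intro F G hFG v hF hG
    rw [hI] at hF hG
    obtain ⟨a, b, hab, ha, hb, hseg, huniq⟩ := edge_segment hpol
      (facet_inter_edge hS F.2 G.2 (fun h => hFG (Subtype.ext h)) ⟨v.1, hF, hG⟩)
    rw [Finset.card_eq_two]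
    refine ⟨⟨a, ha⟩, ⟨b, hb⟩, fun h => hab (congrArg Subtype.val h), ?_⟩
    have h1 : a ∈ F.1 ∩ G.1 := by rw [hseg]; exact left_mem_segment ℝ a b
    have h2 : b ∈ F.1 ∩ G.1 := by rw [hseg]; exact right_mem_segment ℝ a b
    ext w
    simp only [Finset.mem_filter, Finset.mem_univ, true_and, hI, Finset.mem_insert, Finset.mem_singleton]
    constructor
    · rintro h
      rcases huniq w.1 h w.2 with h | h
      · left; exact Subtype.ext h
      · right; exact Subtype.ext h
    · rintro (rfl | rfl)
      · exact h1
      · exact h2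
  · intro F
    have hcard : (Finset.univ.filter (fun G : Ft P => G ≠ F ∧ ∃ v, F ∈ I v ∧ G ∈ I v)).card =
        facetEdges P F.1 := by
      rw [facetEdges_eq hS F.2]
      have : {G | IsFacetOf G P ∧ G ≠ F.1 ∧ ∃ v, IsVertexOf v P ∧ v ∈ F.1 ∧ v ∈ G} =
          Subtype.val '' ((Finset.univ.filter (fun G : Ft P => G ≠ F ∧ ∃ v, F ∈ I v ∧ G ∈ I v) : Finset (Ft P)) : Set (Ft P)) := by
        ext G
        simp only [mem_ofPred_eq, mem_image, Finset.coe_filter, Finset.mem_univ, true_and, hI]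
        constructor
        · rintro ⟨h1, h2, v, hv, h3, h4⟩
          exact ⟨⟨G, h1⟩, ⟨fun h => h2 (congrArg Subtype.val h), ⟨v, hv⟩, h3, h4⟩, rfl⟩
        · rintro ⟨G, ⟨h1, v, h3, h4⟩, rfl⟩
          exact ⟨G.2, fun h => h1 (Subtype.ext h), v.1, v.2, h3, h4⟩
      rw [this, Set.ncard_image_of_injective _ Subtype.val_injective, Set.ncard_coe_finset]
    rw [hcard]
    rcases hP.2 F.1 F.2 with h | h <;> rw [h] <;> omega
  · intro v w h
    exact Subtype.ext (hf v.1 w.1 v.2 w.2 h)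
  · intro F v hF hmax w hw
    rw [hI] at hF hw
    obtain ⟨c⟩ := exists_LocC hS v.2
    obtain ⟨i, hi⟩ := c.all F.1 F.2 hF
    have hu : ∀ k, k ≠ i → f (c.u k) ≤ 0 := by
      intro k hk
      obtain ⟨x, s, hx, hxv, hs, hxe, hxF⟩ := c.nbr hS v.2 k
      obtain ⟨j, hji, hjk, -⟩ := third i k hk.symm
      have := hmax ⟨x, hx⟩ (by rw [hI, hi]; exact hxF i hk.symm) (fun h => hxv (congrArg Subtype.val h))
        ⟨⟨c.F j, c.fac j⟩, fun h => hji (c.inj ((congrArg Subtype.val h).trans hi)),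
          by rw [hI]; exact c.vF j, by rw [hI]; exact hxF j hjk⟩
      simp only [hxe, map_add, map_smul, smul_eq_mul] at this
      nlinarith
    have hwP := vertex_mem w.2
    rw [c.apply f w.1]
    have : ∑ j, (inner ℝ (c.m j) (w.1 - v.1) : ℝ) * f (c.u j) ≤ 0 := by
      apply Finset.sum_nonpos
      intro j _
      by_cases hj : j = i
      · rw [hi, ← hj, c.memF _ hwP] at hw
        rw [hw, zero_mul]
      · exact mul_nonpos_of_nonneg_of_nonpos (c.nonneg _ hwP j) (hu j hj)
    linarith
  · intro v hmax w
    obtain ⟨c⟩ := exists_LocC hS v.2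
    have hu : ∀ k, f (c.u k) ≤ 0 := by
      intro k
      obtain ⟨x, s, hx, hxv, hs, hxe, hxF⟩ := c.nbr hS v.2 k
      obtain ⟨i, j, hij, hki, hkj, -⟩ := others k
      have := hmax ⟨x, hx⟩ (fun h => hxv (congrArg Subtype.val h))
        ⟨⟨c.F i, c.fac i⟩, ⟨c.F j, c.fac j⟩, fun h => hij (c.inj (congrArg Subtype.val h)),
          by rw [hI]; exact c.vF i, by rw [hI]; exact c.vF j, by rw [hI]; exact hxF i hki.symm,
          by rw [hI]; exact hxF j hkj.symm⟩
      simp only [hxe, map_add, map_smul, smul_eq_mul] at this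
      nlinarith
    have hwP := vertex_mem w.2
    rw [c.apply f w.1]
    have : ∑ j, (inner ℝ (c.m j) (w.1 - v.1) : ℝ) * f (c.u j) ≤ 0 :=
      Finset.sum_nonpos fun j _ => mul_nonpos_of_nonneg_of_nonpos (c.nonneg _ hwP j) (hu j)
    linarith

lemma no3_geo {P A B C : Set E3} (hP : IsFullerene P) (hA : IsFacetOf A P) (hB : IsFacetOf B P)
    (hC : IsFacetOf C P) (hAB : A ≠ B) (hAC : A ≠ C) (hBC : B ≠ C) (h1 : (A ∩ B).Nonempty)
    (h2 : (A ∩ C).Nonempty) (h3 : (B ∩ C).Nonempty) : ∃ v, IsVertexOf v P ∧ v ∈ A ∧ v ∈ B ∧ v ∈ C := by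
  classical
  obtain ⟨i1, i2, c, hc⟩ := exists_Cx hP
  have key : ∀ {X Y : Set E3} (hX : IsFacetOf X P) (hY : IsFacetOf Y P), (X ∩ Y).Nonempty →
      (c.Ed ⟨X, hX⟩ ⟨Y, hY⟩).Nonempty := by
    intro X Y hX hY h
    obtain ⟨v, hv, hvv⟩ := face_has_vertex hP.1.1 (face_inter hX.1 hY.1 h)
    exact ⟨⟨v, hvv⟩, by rw [c.mem_Ed, hc, hc]; exact hv⟩
  obtain ⟨v, ha, hb, hcc⟩ := c.no3 (A := ⟨A, hA⟩) (B := ⟨B, hB⟩) (C := ⟨C, hC⟩)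
    (fun h => hAB (congrArg Subtype.val h)) (fun h => hAC (congrArg Subtype.val h))
    (fun h => hBC (congrArg Subtype.val h)) (key hA hB h1) (key hA hC h2) (key hB hC h3)
  rw [hc] at ha hb hcc
  exact ⟨v.1, v.2, ha, hb, hcc⟩

lemma no4_geo {P A B C D : Set E3} (hP : IsFullerene P) (hA : IsFacetOf A P) (hB : IsFacetOf B P)
    (hC : IsFacetOf C P) (hD : IsFacetOf D P) (hAC : A ≠ C) (hBD : B ≠ D) (h1 : (A ∩ B).Nonempty)
    (h2 : (B ∩ C).Nonempty) (h3 : (C ∩ D).Nonempty) (h4 : (D ∩ A).Nonempty) (h5 : A ∩ C = ∅)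
    (h6 : B ∩ D = ∅) : False := by
  classical
  obtain ⟨i1, i2, c, hc⟩ := exists_Cx hP
  have key : ∀ {X Y : Set E3} (hX : IsFacetOf X P) (hY : IsFacetOf Y P), (X ∩ Y).Nonempty →
      (c.Ed ⟨X, hX⟩ ⟨Y, hY⟩).Nonempty := by
    intro X Y hX hY h
    obtain ⟨v, hv, hvv⟩ := face_has_vertex hP.1.1 (face_inter hX.1 hY.1 h)
    exact ⟨⟨v, hvv⟩, by rw [c.mem_Ed, hc, hc]; exact hv⟩
  have key2 : ∀ {X Y : Set E3} (hX : IsFacetOf X P) (hY : IsFacetOf Y P), X ∩ Y = ∅ →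
      c.Ed ⟨X, hX⟩ ⟨Y, hY⟩ = ∅ := by
    intro X Y hX hY h
    rw [Finset.eq_empty_iff_forall_notMem]
    intro v hv
    rw [c.mem_Ed, hc, hc] at hv
    have : v.1 ∈ X ∩ Y := hv
    rw [h] at this
    exact this
  exact c.no4 (A := ⟨A, hA⟩) (B := ⟨B, hB⟩) (C := ⟨C, hC⟩) (D := ⟨D, hD⟩)
    (fun h => hAC (congrArg Subtype.val h)) (fun h => hBD (congrArg Subtype.val h))
    (key hA hB h1) (key hB hC h2) (key hC hD h3) (key hD hA h4) (key2 hA hC h5) (key2 hB hD h6)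

lemma relint_segment {F : Set E3} (hc : Convex ℝ F) {x y : E3} (hy : y ∈ intrinsicInterior ℝ F)
    (hx : x ∈ F) {s : ℝ} (h0 : 0 ≤ s) (h1 : s < 1) : y + s • (x - y) ∈ intrinsicInterior ℝ F := by
  rw [mem_intrinsicInterior] at hy
  obtain ⟨y', hy', rfl⟩ := hy
  have hxA : x ∈ affineSpan ℝ F := mem_affineSpan ℝ hx
  have hmem : ∀ r : ℝ, ∀ z ∈ affineSpan ℝ F, x + r • (z - x) ∈ affineSpan ℝ F := by
    intro r z hz
    have := AffineMap.lineMap_mem r hxA hz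
    rw [AffineMap.lineMap_apply] at this
    simpa [add_comm] using this
  have hr : 0 < 1 - s := by linarith
  have hpe : (y' : E3) + s • (x - y') = x + (1 - s) • (y' - x) := by module
  rw [hpe, mem_intrinsicInterior]
  let θ : affineSpan ℝ F → affineSpan ℝ F := fun z => ⟨x + (1 - s)⁻¹ • (z.1 - x), hmem _ _ z.2⟩
  have hθ : Continuous θ := by
    apply Continuous.subtype_mk
    fun_prop
  refine ⟨⟨_, hmem (1 - s) _ y'.2⟩, ?_, rfl⟩
  rw [mem_interior]
  refine ⟨θ ⁻¹' (interior (Subtype.val ⁻¹' F)), ?_, isOpen_interior.preimage hθ, ?_⟩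
  · intro z hz
    have h2 : θ z ∈ (Subtype.val ⁻¹' F : Set (affineSpan ℝ F)) := interior_subset hz
    have h3 : x + (1 - s)⁻¹ • (z.1 - x) ∈ F := h2
    have h4 := hc hx h3 h0 hr.le (by ring)
    have : s • x + (1 - s) • (x + (1 - s)⁻¹ • (z.1 - x)) = z.1 := by
      match_scalars <;> field_simp <;> ring
    rw [this] at h4
    exact h4
  · have : θ ⟨_, hmem (1 - s) _ y'.2⟩ = y' := by
      apply Subtype.ext
      change x + (1 - s)⁻¹ • (x + (1 - s) • (y'.1 - x) - x) = y'.1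
      match_scalars <;> field_simp <;> ring
    rw [mem_preimage, this]
    exact hy'

lemma facet_frontier {P F : Set E3} (hP : IsSimplePolytope3 P) (hF : IsFacetOf F P) :
    F ⊆ frontier P := by
  have hcp := polytope_compact hP.1
  have hcv := polytope_convex hP.1
  obtain ⟨a, b, ha, hle, he⟩ := facet_support hcp.isClosed hcv (dim3_interior hcv hP.2.1) hF
  intro x hx
  rw [hcp.isClosed.frontier_eq]
  refine ⟨hF.1.2.2.2.1 hx, ?_⟩
  intro hxi
  rw [he] at hx
  have hxb : inner ℝ a x = b := hx.2
  obtain ⟨ε, hε, hb⟩ := Metric.isOpen_iff.1 isOpen_interior x hxi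
  have hna : 0 < ‖a‖ := norm_pos_iff.2 ha
  have hm : x + (ε / (2 * ‖a‖)) • a ∈ P := by
    apply interior_subset; apply hb
    rw [Metric.mem_ball, dist_eq_norm, add_sub_cancel_left, norm_smul, Real.norm_eq_abs,
      abs_of_pos (by positivity)]
    have : ε / (2 * ‖a‖) * ‖a‖ = ε / 2 := by field_simp
    linarith
  have h1 := hle _ hm
  rw [inner_add_right, inner_smul_right, real_inner_self_eq_norm_sq] at h1
  have : 0 < ε / (2 * ‖a‖) * ‖a‖ ^ 2 := by positivity
  linarith

lemma mem_comp {P F γ C : Set E3} (hP : IsSimplePolytope3 P) (hF : IsFacetOf F P)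
    (hC : IsCompOf C (frontier P \ γ)) (hinC : intrinsicInterior ℝ F ⊆ C) {x : E3} (hx : x ∈ F)
    (hxg : x ∉ γ) : x ∈ C := by
  obtain ⟨p, hp, rfl⟩ := hC
  obtain ⟨y, hy⟩ := hF.1.1.intrinsicInterior hF.1.2.2.1
  have hyC := hinC hy
  have hseg : segment ℝ y x ⊆ frontier P \ γ := by
    rintro z ⟨r, s, hr, hs, hrs, rfl⟩
    rcases eq_or_lt_of_le hr with h | h
    · have : s = 1 := by linarith
      rw [← h, this, zero_smul, zero_add, one_smul]
      exact ⟨facet_frontier hP hF hx, hxg⟩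
    · have h2 := relint_segment hF.1.2.2.1 hy hx hs (by linarith)
      have h3 : r • y + s • x = y + s • (x - y) := by
        have : r = 1 - s := by linarith
        rw [this]; module
      rw [h3]
      exact connectedComponentIn_subset _ _ (hinC h2)
  rw [connectedComponentIn_eq hyC]
  exact (convex_segment y x).isPreconnected.subset_connectedComponentIn (left_mem_segment ℝ y x)
    hseg (right_mem_segment ℝ y x)

lemma comp_disj {A C D : Set E3} (hC : IsCompOf C A) (hD : IsCompOf D A) (hne : C ≠ D) {x : E3}
    (h1 : x ∈ C) (h2 : x ∈ D) : False := by
  obtain ⟨p, hp, rfl⟩ := hC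
  obtain ⟨q, hq, rfl⟩ := hD
  exact hne ((connectedComponentIn_eq h1).trans (connectedComponentIn_eq h2).symm)

lemma nxt_ne {n : ℕ} (hn : 2 ≤ n) (i : Fin n) : nxt i ≠ i := by
  intro h
  have h1 : (i.1 + 1) % n = i.1 := congrArg Fin.val h
  have h2 := i.2
  rcases Nat.lt_or_ge (i.1 + 1) n with h3 | h3
  · rw [Nat.mod_eq_of_lt h3] at h1; omega
  · have : i.1 + 1 = n := by omega
    rw [this, Nat.mod_self] at h1; omega

lemma nxt_inj {n : ℕ} (i j : Fin n) (h : nxt i = nxt j) : i = j := by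
  have h1 : (i.1 + 1) % n = (j.1 + 1) % n := congrArg Fin.val h
  have hi := i.2
  have hj := j.2
  apply Fin.ext
  have h2 : i.1 ≡ j.1 [MOD n] := Nat.ModEq.add_right_cancel' 1 h1
  have h3 : i.1 % n = j.1 % n := h2
  rwa [Nat.mod_eq_of_lt hi, Nat.mod_eq_of_lt hj] at h3

lemma mid_open (a b : E3) : (1 / 2 : ℝ) • a + (1 / 2 : ℝ) • b ∈ openSegment ℝ a b :=
  ⟨1 / 2, 1 / 2, by norm_num, by norm_num, by norm_num, rfl⟩

/-- An edge whose midpoint lies on a face is contained in that face. -/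
lemma seg_sub {P e : Set E3} (he : IsFaceOf e P) {a b : E3} (ha : a ∈ P) (hb : b ∈ P)
    (hm : (1 / 2 : ℝ) • a + (1 / 2 : ℝ) • b ∈ e) : segment ℝ a b ⊆ e :=
  he.2.2.1.segment_subset (he.2.2.2.2 ha hb hm (mid_open a b))
    (he.2.2.2.right_mem_of_mem_openSegment ha hb hm (mid_open a b))

lemma fin5_cases (p q : Fin 5) :
    q = p ∨ q = nxt p ∨ p = nxt q ∨ q = nxt (nxt p) ∨ p = nxt (nxt q) := by
  revert p q; decide

lemma fin5_far (p : Fin 5) : p ≠ nxt (nxt p) ∧ ¬ (nxt (nxt p) = nxt p ∨ p = nxt (nxt (nxt p))) := by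
  revert p; decide

/-- If a `k`-loop borders a 5-belt of a fullerene, then its facets are pairwise
different. -/
theorem loop_bordering_five_belt_injective (P : Set E3) (hP : IsFullerene P)
    {k : ℕ} (L : Fin k → Set E3) (B : Fin 5 → Set E3)
    (hL : IsLoop P L) (hB : IsBelt P B) (hbord : Borders P L B) :
    Function.Injective L := by
  obtain ⟨γ, C₁, C₂, hC₁, hC₂, hCne, ⟨-, hinC₁, n, v, φ, hcyc, hsub, hstep, hsurj, -⟩,
    ⟨-, hinC₂, n', v', φ', hcyc', hsub', -, -, -⟩⟩ := hbord
  obtain ⟨hn, hvinj, hvv, hve, hγ⟩ := hcyc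
  obtain ⟨hn', -, hvv', hve', hγ'⟩ := hcyc'
  obtain ⟨-, hBL, -, hB4⟩ := hB
  have hS := hP.1
  have hLf := hL.2.1
  have hBf := hBL.2.1
  have hB4 := hB4 (by norm_num)
  have hBe := hBL.2.2 (by norm_num)
  have hBself : ∀ p, B p ≠ B (nxt p) := by
    intro p h
    have h1 := (hBe p).2
    rw [← h, inter_self, (hBf p).2] at h1
    omega
  have hBinj : ∀ p q, p ≠ q → B p ≠ B q := by
    intro p q hpq h
    have h1 : (B p ∩ B q).Nonempty := by rw [← h, inter_self]; exact (hBf p).1.1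
    rcases (hB4 p q hpq).1 h1 with h2 | h2
    · rw [h2] at h; exact hBself p h
    · rw [h2] at h; exact hBself q h.symm
  have hLB : ∀ i p, L i ≠ B p := by
    intro i p h
    obtain ⟨y, hy⟩ := (hLf i).1.1.intrinsicInterior (hLf i).1.2.2.1
    refine comp_disj hC₁ hC₂ hCne (hinC₁ i hy) (hinC₂ p ?_)
    rw [← h]; exact hy
  have hexB : ∀ t, ∃ p, segment ℝ (v t) (v (nxt t)) ⊆ B p := by
    intro t
    have hm : (1 / 2 : ℝ) • v t + (1 / 2 : ℝ) • v (nxt t) ∈ γ := by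
      rw [hγ, mem_iUnion]
      exact ⟨t, openSegment_subset_segment ℝ _ _ (mid_open _ _)⟩
    rw [hγ', mem_iUnion] at hm
    obtain ⟨s, hs⟩ := hm
    exact ⟨φ' s, (seg_sub (hve' s).1 (vertex_mem (hvv t)) (vertex_mem (hvv _)) hs).trans (hsub' s)⟩
  have hV : ∀ t F G, IsFacetOf F P → IsFacetOf G P → F ≠ G → segment ℝ (v t) (v (nxt t)) ⊆ F →
      segment ℝ (v t) (v (nxt t)) ⊆ G → ∀ w, IsVertexOf w P → w ∈ F → w ∈ G →
      w = v t ∨ w = v (nxt t) := by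
    intro t F G hF hG hFG htF htG w hw hwF hwG
    obtain ⟨a, b, hab, ha, hb, hseg, huniq⟩ := edge_segment hS.1
      (facet_inter_edge hS hF hG hFG ⟨w, hwF, hwG⟩)
    have hl := left_mem_segment ℝ (v t) (v (nxt t))
    have hr := right_mem_segment ℝ (v t) (v (nxt t))
    have h1 := huniq w ⟨hwF, hwG⟩ hw
    have h2 := huniq (v t) ⟨htF hl, htG hl⟩ (hvv t)
    have h3 := huniq (v (nxt t)) ⟨htF hr, htG hr⟩ (hvv _)
    have h4 : v t ≠ v (nxt t) := fun h => nxt_ne (by omega) t (hvinj h).symm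
    grind
  intro i j hij
  by_contra hijne
  have hk : 2 ≤ k := by
    have h1 := i.2
    have h2 := j.2
    have h3 : i.1 ≠ j.1 := fun h => hijne (Fin.ext h)
    omega
  have hLe := hL.2.2 hk
  have hLself : ∀ i, L i ≠ L (nxt i) := by
    intro p h
    have h1 := (hLe p).2
    rw [← h, inter_self, (hLf p).2] at h1
    omega
  obtain ⟨F, hFi⟩ : ∃ F, F = L i := ⟨_, rfl⟩
  have hFf : IsFacetOf F P := by rw [hFi]; exact hLf i
  have hadj : ∀ t, L (φ t) = F → L (φ (nxt t)) = F → φ t = φ (nxt t) := by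
    intro t h1 h2
    rcases hstep t with h | h
    · exact h.symm
    · rw [h] at h2
      exact absurd (h1.trans h2.symm) (hLself _)
  have hshare : ∀ t t' w, L (φ t) = F → L (φ t') = F → (w = v t ∨ w = v (nxt t)) →
      (w = v t' ∨ w = v (nxt t')) → φ t = φ t' := by
    intro t t' w h1 h2 h3 h4
    rcases h3 with rfl | rfl <;> rcases h4 with h4 | h4
    · rw [hvinj h4]
    · have := hvinj h4
      rw [this] at h1 ⊢
      exact (hadj t' h2 h1).symm
    · have := hvinj h4
      rw [← this] at h2 ⊢
      exact hadj t h1 h2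
    · rw [nxt_inj _ _ (hvinj h4)]
  have hFB : ∀ p, F ≠ B p := fun p => by rw [hFi]; exact hLB i p
  have hsF : ∀ t, L (φ t) = F → segment ℝ (v t) (v (nxt t)) ⊆ F := fun t h => h ▸ hsub t
  have hl : ∀ t, v t ∈ segment ℝ (v t) (v (nxt t)) := fun t => left_mem_segment ℝ _ _
  have ha0 : ∀ t t' p, L (φ t) = F → L (φ t') = F → segment ℝ (v t) (v (nxt t)) ⊆ B p →
      segment ℝ (v t') (v (nxt t')) ⊆ B p → φ t = φ t' := by
    intro t t' p h1 h2 h3 h4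
    exact hshare t t' (v t) h1 h2 (Or.inl rfl)
      (hV t' F (B p) hFf (hBf p) (hFB p) (hsF t' h2) h4 (v t) (hvv t) (hsF t h1 (hl t)) (h3 (hl t)))
  have ha1 : ∀ t t' p, L (φ t) = F → L (φ t') = F → segment ℝ (v t) (v (nxt t)) ⊆ B p →
      segment ℝ (v t') (v (nxt t')) ⊆ B (nxt p) → φ t = φ t' := by
    intro t t' p h1 h2 h3 h4
    obtain ⟨w, hw, hwF, hw1, hw2⟩ := no3_geo hP hFf (hBf p) (hBf (nxt p)) (hFB _) (hFB _) (hBself p)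
      ⟨v t, hsF t h1 (hl t), h3 (hl t)⟩ ⟨v t', hsF t' h2 (hl t'), h4 (hl t')⟩ (hBe p).1.1
    exact hshare t t' w h1 h2
      (hV t F (B p) hFf (hBf p) (hFB p) (hsF t h1) h3 w hw hwF hw1)
      (hV t' F (B (nxt p)) hFf (hBf _) (hFB _) (hsF t' h2) h4 w hw hwF hw2)
  have ha2 : ∀ t t' p, L (φ t) = F → L (φ t') = F → segment ℝ (v t) (v (nxt t)) ⊆ B p →
      segment ℝ (v t') (v (nxt t')) ⊆ B (nxt (nxt p)) → φ t = φ t' := by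
    intro t t' p h1 h2 h3 h4
    have hfar := fin5_far p
    by_cases hcon : (F ∩ B (nxt p)).Nonempty
    · have hedge := facet_inter_edge hS hFf (hBf (nxt p)) (hFB _) hcon
      obtain ⟨a, b, hab, ha, hb, hseg, -⟩ := edge_segment hS.1 hedge
      have hmF : (1 / 2 : ℝ) • a + (1 / 2 : ℝ) • b ∈ F ∩ B (nxt p) := by
        rw [hseg]; exact openSegment_subset_segment ℝ _ _ (mid_open _ _)
      have hmγ : (1 / 2 : ℝ) • a + (1 / 2 : ℝ) • b ∈ γ := by
        by_contra hmγ
        exact comp_disj hC₁ hC₂ hCne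
          (mem_comp hS hFf hC₁ (by rw [hFi]; exact hinC₁ i) hmF.1 hmγ)
          (mem_comp hS (hBf (nxt p)) hC₂ (hinC₂ _) hmF.2 hmγ)
      rw [hγ, mem_iUnion] at hmγ
      obtain ⟨s, hs⟩ := hmγ
      have hsubs := seg_sub (hve s).1 (vertex_mem ha) (vertex_mem hb) hs
      rw [← hseg] at hsubs
      have heq := face_eq hedge.1.2.2.2 hedge.1.2.2.1 hedge.1.1 hsubs (hve s).1.2.2.2.1
        (by rw [hedge.2, (hve s).2])
      have hLs : L (φ s) = F := by
        rcases inter_facets hS hFf (hBf (nxt p)) (hFB _) hcon (hLf (φ s))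
          (by rw [heq]; exact hsub s) with h | h
        · exact h
        · exact absurd h (hLB _ _)
      have hsB : segment ℝ (v s) (v (nxt s)) ⊆ B (nxt p) := by
        rw [← heq]; exact inter_subset_right
      exact (ha1 t s p h1 hLs h3 hsB).trans (ha1 s t' (nxt p) hLs h2 hsB h4)
    · exfalso
      rw [not_nonempty_iff_eq_empty] at hcon
      refine no4_geo hP hFf (hBf p) (hBf (nxt p)) (hBf (nxt (nxt p))) (hFB _) (hBinj _ _ hfar.1)
        ⟨v t, hsF t h1 (hl t), h3 (hl t)⟩ (hBe p).1.1 (hBe (nxt p)).1.1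
        ⟨v t', h4 (hl t'), hsF t' h2 (hl t')⟩ hcon ?_
      rw [← not_nonempty_iff_eq_empty]
      intro h
      exact hfar.2 ((hB4 _ _ hfar.1).1 h)
  obtain ⟨t, ht⟩ := hsurj i
  obtain ⟨t', ht'⟩ := hsurj j
  have hLt : L (φ t) = F := by rw [ht, hFi]
  have hLt' : L (φ t') = F := by rw [ht', ← hij, hFi]
  obtain ⟨p, hp⟩ := hexB t
  obtain ⟨q, hq⟩ := hexB t'
  apply hijne
  rw [← ht, ← ht']
  rcases fin5_cases p q with h | h | h | h | h
  · rw [h] at hq; exact ha0 t t' p hLt hLt' hp hq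
  · rw [h] at hq; exact ha1 t t' p hLt hLt' hp hq
  · rw [h] at hp; exact (ha1 t' t q hLt' hLt hq hp).symm
  · rw [h] at hq; exact ha2 t t' p hLt hLt' hp hq
  · rw [h] at hp; exact (ha2 t' t q hLt' hLt hq hp).symm
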